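/- Assume that q^i v_j − v_k ≠ 0 in k for all integers i with |i| < n and all 1 ≤ j ≠ k ≤ m, and that 1 + q + ⋯ + q^i ≠ 0 in k for all 1 ≤ i < n. Then there is a family (V^λ), indexed by the m-multipartitions λ of n, of pairwise non-isomorphic simple right H_n(v_1,…,v_m;q)-modules such that every simple right H_n-module is isomorphic to some V^λ, and the k-dimension of V^λ equals the number of standard tableaux of shape λ. -/

import Mathlib

noncomputable section
open scoped Classical
open scoped Fin.NatCast

namespace Cyclo

/-- The defining relations of the cyclotomic Hecke algebra of type `G(m,1,n)`.
Generator `i : Fin n` corresponds to `a_{i+1}` of the paper. -/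
inductive Rel (k : Type) [Field k] (m n : ℕ) (v : Fin m → k) (q : k) :
    FreeAlgebra k (Fin n) → FreeAlgebra k (Fin n) → Prop
  | cyclo (i : Fin n) (hi : i.1 = 0) :
      Rel k m n v q
        ((List.ofFn fun j : Fin m =>
          (FreeAlgebra.ι k i - algebraMap k (FreeAlgebra k (Fin n)) (v j))).prod) 0
  | quad (i : Fin n) (hi : 1 ≤ i.1) :
      Rel k m n v q
        ((FreeAlgebra.ι k i - algebraMap k (FreeAlgebra k (Fin n)) q) * (FreeAlgebra.ι k i + 1)) 0
  | braid0 (i j : Fin n) (hi : i.1 = 0) (hj : j.1 = 1) :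
      Rel k m n v q
        (FreeAlgebra.ι k i * FreeAlgebra.ι k j * FreeAlgebra.ι k i * FreeAlgebra.ι k j)
        (FreeAlgebra.ι k j * FreeAlgebra.ι k i * FreeAlgebra.ι k j * FreeAlgebra.ι k i)
  | comm (i j : Fin n) (h : i.1 + 2 ≤ j.1) :
      Rel k m n v q (FreeAlgebra.ι k i * FreeAlgebra.ι k j)
        (FreeAlgebra.ι k j * FreeAlgebra.ι k i)
  | braid (i j : Fin n) (hi : 1 ≤ i.1) (hj : j.1 = i.1 + 1) :
      Rel k m n v q
        (FreeAlgebra.ι k j * FreeAlgebra.ι k i * FreeAlgebra.ι k j)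
        (FreeAlgebra.ι k i * FreeAlgebra.ι k j * FreeAlgebra.ι k i)

/-- The cyclotomic Hecke algebra `H_n(v_1,…,v_m;q)` of type `G(m,1,n)`. -/
def CH (k : Type) [Field k] (m n : ℕ) (v : Fin m → k) (q : k) : Type :=
  RingQuot (Rel k m n v q)

instance (k : Type) [Field k] (m n : ℕ) (v : Fin m → k) (q : k) : Ring (CH k m n v q) :=
  inferInstanceAs (Ring (RingQuot (Rel k m n v q)))

instance (k : Type) [Field k] (m n : ℕ) (v : Fin m → k) (q : k) : Algebra k (CH k m n v q) :=
  inferInstanceAs (Algebra k (RingQuot (Rel k m n v q)))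

variable (k : Type) [Field k] (m n : ℕ) (v : Fin m → k) (q : k)

/-- `gen k m n v q t` is the generator `a_{t+1}` (so `gen 0 = a_1`, …, `gen (n-1) = a_n`). -/
def gen [NeZero n] (t : ℕ) : CH k m n v q :=
  RingQuot.mkAlgHom k (Rel k m n v q) (FreeAlgebra.ι k ((t : Fin n)))

/-- `murphyAux k m n v q t` is the Murphy element `L_{t+1}`. -/
def murphyAux [NeZero n] : ℕ → CH k m n v q
  | 0 => gen k m n v q 0
  | t + 1 => q⁻¹ • (gen k m n v q (t + 1) * murphyAux t * gen k m n v q (t + 1))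

/-- The Murphy element `L_{i+1}`, for `i : Fin n`. -/
def murphy [NeZero n] (i : Fin n) : CH k m n v q := murphyAux k m n v q i.1

/-- The product of adjacent transpositions encoded by a list of `0`-based indices:
`t` encodes the transposition `(t, t+1)` (in `0`-based labels), i.e. `s_{t+1}` of the paper. -/
def swapProd [NeZero n] (l : List ℕ) : Equiv.Perm (Fin n) :=
  (l.map fun t => Equiv.swap ((t : Fin n)) (((t + 1 : ℕ) : Fin n))).prod

/-- The corresponding product of generators of the Hecke algebra: the index `t`
(encoding `s_{t+1}`) contributes the generator `a_{t+2} = gen (t+1)`. -/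
def genProd [NeZero n] (l : List ℕ) : CH k m n v q :=
  (l.map fun t => gen k m n v q (t + 1)).prod

/-- `l` is a reduced word for the permutation `w`. -/
def IsReducedWord [NeZero n] (l : List ℕ) (w : Equiv.Perm (Fin n)) : Prop :=
  (∀ t ∈ l, t + 1 < n) ∧ swapProd n l = w ∧
    ∀ l' : List ℕ, (∀ t ∈ l', t + 1 < n) → swapProd n l' = w → l.length ≤ l'.length

/-- `aw` assigns to each permutation `w` the element `a_w` computed from a(ny) reduced word. -/
def IsAW [NeZero n] (aw : Equiv.Perm (Fin n) → CH k m n v q) : Prop :=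
  ∀ (w : Equiv.Perm (Fin n)) (l : List ℕ), IsReducedWord n l w → aw w = genProd k m n v q l



/-- An `m`-multipartition of `n`:  `part c` is the partition `λ^{(c+1)}`
(so `c = m-1` corresponds to the component `λ^{(m)}` of the paper), given by its
(weakly decreasing) list of row lengths `part c 0, part c 1, …`. -/
structure Multipartition (m n : ℕ) where
  part : Fin m → ℕ → ℕ
  mono : ∀ c i, part c (i + 1) ≤ part c i
  bound : ∀ c i, n ≤ i → part c i = 0
  total : (∑ c : Fin m, ∑ i ∈ Finset.range n, part c i) = n

namespace Multipartition

variable {m n : ℕ}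

/-- The size `|λ^{(c+1)}|` of a component. -/
def compSize (Λ : Multipartition m n) (c : Fin m) : ℕ :=
  ∑ i ∈ Finset.range n, Λ.part c i

/-- `|λ^{(1)}| + ⋯ + |λ^{(kk)}|`. -/
def compSizeUpto (Λ : Multipartition m n) (kk : ℕ) : ℕ :=
  ∑ c ∈ Finset.range kk, (if h : c < m then Λ.compSize ⟨c, h⟩ else 0)

/-- The statistic `Σ_{j>k}|λ^{(j)}| + Σ_{j=1}^{l} λ^{(k)}_j` of the dominance order,
where the component `k` (`1`-based) is `c.1 + 1`. -/
def domStat (Λ : Multipartition m n) (c : Fin m) (l : ℕ) : ℕ :=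
  (∑ c' ∈ Finset.univ.filter (fun c' : Fin m => c.1 < c'.1), Λ.compSize c') +
    ∑ j ∈ Finset.range l, Λ.part c j

/-- The dominance order `Λ ⊵ M`. -/
def Dominates (Λ M : Multipartition m n) : Prop :=
  ∀ (c : Fin m) (l : ℕ), M.domStat c l ≤ Λ.domStat c l

/-- Strict dominance `Λ ▷ M`. -/
def StrictDom (Λ M : Multipartition m n) : Prop :=
  Λ.Dominates M ∧ Λ ≠ M

/-- The (0-based) entry of the canonical tableau `t^Λ` in the box in row `i`, column `j`
of component `c`: the boxes are filled row by row, starting with the rows of `λ^{(m)}`,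
then those of `λ^{(m-1)}`, and so on. -/
def canonEntry (Λ : Multipartition m n) (c : Fin m) (i j : ℕ) : ℕ :=
  (∑ c' ∈ Finset.univ.filter (fun c' : Fin m => c.1 < c'.1), Λ.compSize c') +
    (∑ i' ∈ Finset.range i, Λ.part c i') + j

end Multipartition

/-- A standard tableau of shape `Λ`, with (0-based) entries `0, …, n-1`:
`entry c i j` is the entry in the box in row `i`, column `j` of component `c`
(and is normalised to `0` outside the boxes of `Λ`). -/
structure StdTableau {m n : ℕ} (Λ : Multipartition m n) where
  entry : Fin m → ℕ → ℕ → ℕ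
  lt_n : ∀ c i j, j < Λ.part c i → entry c i j < n
  inj : ∀ c i j c' i' j', j < Λ.part c i → j' < Λ.part c' i' →
    entry c i j = entry c' i' j' → (c, i, j) = (c', i', j')
  surj : ∀ x, x < n → ∃ c i j, j < Λ.part c i ∧ entry c i j = x
  row : ∀ c i j, j + 1 < Λ.part c i → entry c i j < entry c i (j + 1)
  col : ∀ c i j, j < Λ.part c (i + 1) → entry c i j < entry c (i + 1) j
  outside : ∀ c i j, ¬ j < Λ.part c i → entry c i j = 0

variable (k : Type) [Field k] (m n : ℕ)

/-- `d` assigns to each standard tableau `T` of each shape `Λ` the permutation `d(T)`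
sending, box by box, the entry of the canonical tableau `t^Λ` to the entry of `T`. -/
def IsD [NeZero n] (d : ∀ Λ : Multipartition m n, StdTableau Λ → Equiv.Perm (Fin n)) : Prop :=
  ∀ (Λ : Multipartition m n) (T : StdTableau Λ) (c : Fin m) (i j : ℕ), j < Λ.part c i →
    d Λ T ((Λ.canonEntry c i j : ℕ) : Fin n) = ((T.entry c i j : ℕ) : Fin n)

/-- Membership in the row stabiliser `S_Λ` of the canonical tableau `t^Λ`. -/
def InRowStab [NeZero n] (Λ : Multipartition m n) (w : Equiv.Perm (Fin n)) : Prop :=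
  ∀ (c : Fin m) (i j : ℕ), j < Λ.part c i →
    ∃ j', j' < Λ.part c i ∧
      w ((Λ.canonEntry c i j : ℕ) : Fin n) = ((Λ.canonEntry c i j' : ℕ) : Fin n)


variable (k : Type) [Field k] (m n : ℕ) (v : Fin m → k) (q : k)

open Multipartition

/-- The element `x_Λ = Σ_{w ∈ S_Λ} a_w`, where `aw` computes the elements `a_w`. -/
def xlam [NeZero n] (aw : Equiv.Perm (Fin n) → CH k m n v q) (Λ : Multipartition m n) :
    CH k m n v q :=
  ∑ w : Equiv.Perm (Fin n), if InRowStab m n Λ w then aw w else 0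

/-- `a_kk = n − |λ^{(1)}| − ⋯ − |λ^{(kk)}|`. -/
def aVal (Λ : Multipartition m n) (kk : ℕ) : ℕ := n - Λ.compSizeUpto kk

/-- The element `u_a = ∏_{kk} (L_1 − v_kk)(L_2 − v_kk)⋯(L_{a_kk} − v_kk)`. -/
def ua [NeZero n] (Λ : Multipartition m n) : CH k m n v q :=
  (List.ofFn fun kk : Fin m =>
    (List.ofFn fun ii : Fin n =>
      if ii.1 < aVal m n Λ (kk.1 + 1) then
        murphy k m n v q ii - algebraMap k (CH k m n v q) (v kk)
      else 1).prod).prod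

/-- The element `m_Λ = x_Λ u_a`. -/
def mlam [NeZero n] (aw : Equiv.Perm (Fin n) → CH k m n v q) (Λ : Multipartition m n) :
    CH k m n v q :=
  xlam k m n v q aw Λ * ua k m n v q Λ

/-- The element `m_{st} = a_{d(s)}^* ⬝ m_Λ ⬝ a_{d(t)}`;  here `aw` computes the
elements `a_w`, `σ` is the `*` anti-involution and `d` computes the permutations `d(t)`. -/
def mst [NeZero n] (aw : Equiv.Perm (Fin n) → CH k m n v q) (σ : CH k m n v q →ₗ[k] CH k m n v q)
    (d : ∀ Λ : Multipartition m n, StdTableau Λ → Equiv.Perm (Fin n))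
    {Λ : Multipartition m n} (s t : StdTableau Λ) : CH k m n v q :=
  σ (aw (d Λ s)) * mlam k m n v q aw Λ * aw (d Λ t)

/-- `σ` is the `*` anti-involution: the `k`-linear anti-automorphism fixing the generators. -/
def IsStar [NeZero n] (σ : CH k m n v q →ₗ[k] CH k m n v q) : Prop :=
  σ 1 = 1 ∧ (∀ x y, σ (x * y) = σ y * σ x) ∧ ∀ t, t < n → σ (gen k m n v q t) = gen k m n v q t

/-- The set of elements `m_{uv}`, for `u, v` standard tableaux of a common shape `M ▷ Λ`. -/
def IsetSet [NeZero n] (aw : Equiv.Perm (Fin n) → CH k m n v q)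
    (σ : CH k m n v q →ₗ[k] CH k m n v q)
    (d : ∀ Λ : Multipartition m n, StdTableau Λ → Equiv.Perm (Fin n))
    (Λ : Multipartition m n) : Set (CH k m n v q) :=
  {x | ∃ (M : Multipartition m n) (_ : M.StrictDom Λ) (u v' : StdTableau M),
    x = mst k m n v q aw σ d u v'}

/-- `I_Λ`, the `k`-span of the `m_{uv}` with shape strictly dominating `Λ`. -/
def Ilam [NeZero n] (aw : Equiv.Perm (Fin n) → CH k m n v q)
    (σ : CH k m n v q →ₗ[k] CH k m n v q)
    (d : ∀ Λ : Multipartition m n, StdTableau Λ → Equiv.Perm (Fin n))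
    (Λ : Multipartition m n) : Submodule k (CH k m n v q) :=
  Submodule.span k (IsetSet k m n v q aw σ d Λ)

/-- The image `z_Λ h` of `m_Λ h` in the quotient `H_n / I_Λ`. -/
def zh [NeZero n] (aw : Equiv.Perm (Fin n) → CH k m n v q)
    (σ : CH k m n v q →ₗ[k] CH k m n v q)
    (d : ∀ Λ : Multipartition m n, StdTableau Λ → Equiv.Perm (Fin n))
    (Λ : Multipartition m n) (h : CH k m n v q) :
    CH k m n v q ⧸ Ilam k m n v q aw σ d Λ :=
  Submodule.Quotient.mk (mlam k m n v q aw Λ * h)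

/-- The Specht module `S^Λ = z_Λ ⬝ (H_n/I_Λ)`, as a `k`-submodule of `H_n / I_Λ`. -/
def Specht [NeZero n] (aw : Equiv.Perm (Fin n) → CH k m n v q)
    (σ : CH k m n v q →ₗ[k] CH k m n v q)
    (d : ∀ Λ : Multipartition m n, StdTableau Λ → Equiv.Perm (Fin n))
    (Λ : Multipartition m n) :
    Submodule k (CH k m n v q ⧸ Ilam k m n v q aw σ d Λ) :=
  Submodule.span k (Set.range (zh k m n v q aw σ d Λ))

/-- The generator `z_Λ h` as an element of the Specht module. -/
def zhS [NeZero n] (aw : Equiv.Perm (Fin n) → CH k m n v q)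
    (σ : CH k m n v q →ₗ[k] CH k m n v q)
    (d : ∀ Λ : Multipartition m n, StdTableau Λ → Equiv.Perm (Fin n))
    (Λ : Multipartition m n) (h : CH k m n v q) :
    Specht k m n v q aw σ d Λ :=
  ⟨zh k m n v q aw σ d Λ h, Submodule.subset_span ⟨h, rfl⟩⟩

/-!
The algebra acts on the vector space with basis the standard tableaux with `n` boxes by Young's
seminormal formulas. Neighbouring entries that can be exchanged are exchanged with a nonzero
coefficient, so the image contains all matrix units between tableaux of the same shape as soon as it
contains the diagonal ones. The latter are isolated one entry after the other; the eigenvalues of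
the Jucys–Murphy elements would not suffice for this, since they do not separate tableaux when
`q = 1` or when some `v j` vanishes. On the other hand `H_n` is spanned by `m ^ n * n!` elements,
and this is also the number of pairs of standard tableaux of the same shape, because every
multipartition has `m` more addable than removable boxes. Hence `H_n` is the algebra of
block diagonal matrices, with one block for each shape.
-/

/-! ### Standard sequences in a partial order -/

section Sequences

variable {P : Type*} {T T' : ℕ → P} {r s i j : ℕ} {x : P}

/-- The set of the first `r` entries of a sequence. -/
def initSeg [DecidableEq P] (r : ℕ) (T : ℕ → P) : Finset P := (Finset.range r).image T

/-- The sequence `T` with the entries at `i` and `i + 1` interchanged. -/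
def swapSeq (i : ℕ) (T : ℕ → P) : ℕ → P := T ∘ Equiv.swap i (i + 1)

theorem mem_initSeg [DecidableEq P] : x ∈ initSeg r T ↔ ∃ i < r, T i = x := by simp [initSeg]

theorem initSeg_zero [DecidableEq P] : initSeg 0 T = ∅ := by simp [initSeg]

theorem initSeg_succ [DecidableEq P] (r : ℕ) (T : ℕ → P) :
    initSeg (r + 1) T = insert (T r) (initSeg r T) := by
  simp [initSeg, Finset.range_add_one]

theorem initSeg_congr [DecidableEq P] (h : ∀ i < r, T i = T' i) : initSeg r T = initSeg r T' :=
  Finset.image_congr fun i hi => h i (by simpa using hi)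

theorem swapSeq_left (i : ℕ) (T : ℕ → P) : swapSeq i T i = T (i + 1) := by simp [swapSeq]

theorem swapSeq_right (i : ℕ) (T : ℕ → P) : swapSeq i T (i + 1) = T i := by simp [swapSeq]

theorem swapSeq_of_ne (h : j ≠ i) (h' : j ≠ i + 1) : swapSeq i T j = T j := by
  simp [swapSeq, Equiv.swap_apply_of_ne_of_ne h h']

theorem swapSeq_swapSeq (i : ℕ) (T : ℕ → P) : swapSeq i (swapSeq i T) = T := by
  funext j; simp [swapSeq]

theorem initSeg_swapSeq [DecidableEq P] (h : i + 1 < r) :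
    initSeg r (swapSeq i T) = initSeg r T := by
  have hswap : (Finset.range r).map (Equiv.swap i (i + 1)).toEmbedding = Finset.range r :=
    Finset.eq_of_subset_of_card_le (fun l => by
      simp only [Finset.mem_map_equiv, Equiv.symm_swap, Finset.mem_range, Equiv.swap_apply_def]
      split_ifs <;> omega) (by simp)
  unfold initSeg swapSeq
  conv_rhs => rw [← hswap]
  rw [Finset.map_eq_image, Finset.image_image]
  rfl

theorem initSeg_update_self [DecidableEq P] (T : ℕ → P) (r : ℕ) (x : P) :
    initSeg (r + 1) (Function.update T r x) = insert x (initSeg r T) := by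
  rw [initSeg_succ, Function.update_self,
    initSeg_congr fun i hi => Function.update_of_ne hi.ne x T]

end Sequences

section StandardSequences

variable {P : Type*} [PartialOrder P] {T T' : ℕ → P} {r s i j : ℕ} {x : P}

/-- The first `r` entries of `T` enumerate a lower set of `P` along a linear extension of its order.
For boxes of Young diagrams these are the standard tableaux with `r` boxes: `T i` is the box
containing the entry `i`. -/
structure IsStandard (r : ℕ) (T : ℕ → P) : Prop where
  injOn : Set.InjOn T (Set.Iio r)
  exists_of_lt : ∀ j < r, ∀ x < T j, ∃ i < j, T i = x

namespace IsStandard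

theorem mono (hT : IsStandard r T) (h : s ≤ r) : IsStandard s T :=
  ⟨hT.injOn.mono (Set.Iio_subset_Iio h), fun j hj => hT.exists_of_lt j (hj.trans_le h)⟩

theorem congr (hT : IsStandard r T) (h : ∀ i < r, T i = T' i) : IsStandard r T' where
  injOn := hT.injOn.congr h
  exists_of_lt j hj x hx := by
    obtain ⟨i, hi, rfl⟩ := hT.exists_of_lt j hj x (by rwa [h j hj])
    exact ⟨i, hi, (h i (hi.trans hj)).symm⟩

theorem not_le (hT : IsStandard r T) (hij : i < j) (hj : j < r) : ¬ T j ≤ T i := by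
  intro hle
  obtain heq | hlt := hle.eq_or_lt
  · exact hij.ne' (hT.injOn hj (hij.trans hj) heq)
  · obtain ⟨l, hl, hlj⟩ := hT.exists_of_lt i (hij.trans hj) _ hlt
    exact (hl.trans hij).ne (hT.injOn ((hl.trans hij).trans hj) hj hlj)

theorem notMem_initSeg [DecidableEq P] (hT : IsStandard r T) (hj : j < r) :
    T j ∉ initSeg j T := by
  rw [mem_initSeg]
  rintro ⟨i, hi, hij⟩
  exact hT.not_le hi hj hij.ge

theorem card_initSeg [DecidableEq P] (hT : IsStandard r T) : (initSeg r T).card = r := by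
  rw [initSeg, Finset.card_image_of_injOn (by simpa using hT.injOn), Finset.card_range]

theorem isLowerSet_initSeg [DecidableEq P] (hT : IsStandard r T) (h : s ≤ r) :
    IsLowerSet (initSeg s T : Set P) := by
  intro y x hxy hy
  obtain ⟨j, hj, rfl⟩ := mem_initSeg.1 hy
  obtain rfl | hlt := hxy.eq_or_lt
  · exact hy
  · obtain ⟨i, hi, rfl⟩ := hT.exists_of_lt j (hj.trans_le h) x hlt
    exact mem_initSeg.2 ⟨i, hi.trans hj, rfl⟩

theorem succ_iff [DecidableEq P] :
    IsStandard (r + 1) T ↔ IsStandard r T ∧ T r ∉ initSeg r T ∧ ∀ x < T r, x ∈ initSeg r T := by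
  refine ⟨fun hT => ⟨hT.mono r.le_succ, hT.notMem_initSeg r.lt_succ_self,
    fun x hx => mem_initSeg.2 (hT.exists_of_lt r r.lt_succ_self x hx)⟩, ?_⟩
  rintro ⟨hT, hnot, hlt⟩
  refine ⟨?_, fun j hj x hx => ?_⟩
  · rw [← Order.succ_eq_add_one, Order.Iio_succ_eq_insert,
      Set.injOn_insert (Set.self_notMem_Iio (a := r))]
    exact ⟨hT.injOn, by simpa [mem_initSeg] using hnot⟩
  · obtain rfl | hj := Nat.lt_succ_iff_lt_or_eq.1 hj |>.symm
    · exact mem_initSeg.1 (hlt x hx)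
    · exact hT.exists_of_lt j hj x hx

theorem snoc [DecidableEq P] (hT : IsStandard r T) (hx : x ∉ initSeg r T)
    (hlt : ∀ y < x, y ∈ initSeg r T) : IsStandard (r + 1) (Function.update T r x) := by
  have hagree : ∀ i < r, T i = Function.update T r x i := fun i hi => by
    rw [Function.update_of_ne hi.ne]
  rw [succ_iff, ← initSeg_congr hagree, Function.update_self]
  exact ⟨hT.congr hagree, hx, hlt⟩

theorem covBy_of_lt (hT : IsStandard r T) (hi : i + 1 < r) (h : T i < T (i + 1)) :
    T i ⋖ T (i + 1) := by
  refine ⟨h, fun x hx hx' => ?_⟩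
  obtain ⟨l, hl, rfl⟩ := hT.exists_of_lt _ hi x hx'
  obtain rfl | hl := Nat.lt_succ_iff_lt_or_eq.1 hl |>.symm
  · exact hx.false
  · exact hT.not_le hl (by omega) hx.le

theorem swapSeq (hT : IsStandard r T) (hi : i + 1 < r) (h : ¬ T i < T (i + 1)) :
    IsStandard r (swapSeq i T) := by
  have hlt : ∀ j < r, Equiv.swap i (i + 1) j < r := fun j hj => by
    rw [Equiv.swap_apply_def]; split_ifs <;> omega
  refine ⟨hT.injOn.comp (Equiv.injective _).injOn hlt, fun j hj x hx => ?_⟩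
  obtain ⟨l, hl, rfl⟩ := hT.exists_of_lt _ (hlt j hj) x hx
  refine ⟨Equiv.swap i (i + 1) l, ?_, by simp [Cyclo.swapSeq]⟩
  have hne : ¬ (l = i ∧ j = i) := by
    rintro ⟨rfl, rfl⟩
    exact h (by simpa [Cyclo.swapSeq] using hx)
  rw [Equiv.swap_apply_def] at hl ⊢
  split_ifs at hl ⊢ <;> omega

end IsStandard

theorem exists_isStandard_initSeg_eq [DecidableEq P] (d : P) {D : Finset P}
    (hD : IsLowerSet (D : Set P)) :
    ∃ T : ℕ → P, IsStandard D.card T ∧ initSeg D.card T = D ∧ ∀ i, D.card ≤ i → T i = d := by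
  induction hr : D.card generalizing D with
  | zero =>
    exact ⟨fun _ => d, ⟨by simp, by simp⟩, by rw [initSeg_zero, Finset.card_eq_zero.1 hr],
      fun _ _ => rfl⟩
  | succ r ih =>
    obtain ⟨x, hx⟩ := D.exists_maximal (Finset.card_pos.1 (by omega))
    have hlower : IsLowerSet ((D.erase x : Finset P) : Set P) := by
      rw [Finset.coe_erase]
      exact IsLowerSet.erase hD fun y hy hxy => hx.eq_of_ge hy hxy
    obtain ⟨T, hT, hTD, htail⟩ := ih hlower (by rw [Finset.card_erase_of_mem hx.prop, hr]; rfl)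
    refine ⟨Function.update T r x, hT.snoc ?_ ?_, ?_, fun i hi => ?_⟩
    · rw [hTD]; exact Finset.notMem_erase x D
    · intro y hy
      rw [hTD]
      exact Finset.mem_erase.2 ⟨hy.ne, hD hy.le hx.prop⟩
    · rw [initSeg_update_self, hTD, Finset.insert_erase hx.prop]
    · rw [Function.update_of_ne (by omega)]
      exact htail i (by omega)

/-- One admissible exchange of two neighbouring entries among the first `r`. -/
def SwapStep (r : ℕ) (T T' : ℕ → P) : Prop :=
  ∃ i, i + 1 < r ∧ ¬ T i < T (i + 1) ∧ T' = swapSeq i T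

theorem SwapStep.mono (h : s ≤ r) : SwapStep s T T' → SwapStep r T T' :=
  fun ⟨i, hi, hT⟩ => ⟨i, hi.trans_le h, hT⟩

theorem mem_initSeg_of_last_ne [DecidableEq P] (hT : IsStandard (r + 1) T)
    (hT' : IsStandard (r + 1) T') (hset : initSeg (r + 1) T = initSeg (r + 1) T')
    (hne : T r ≠ T' r) : T r ∈ initSeg r T' ∧ ∀ x < T r, x ∈ initSeg r T ∩ initSeg r T' := by
  have hmem : T r ∈ initSeg r T' := by
    have h : T r ∈ initSeg (r + 1) T' := hset ▸ initSeg_succ r T ▸ Finset.mem_insert_self _ _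
    exact (Finset.mem_insert.1 (initSeg_succ r T' ▸ h)).resolve_left hne
  exact ⟨hmem, fun x hx => Finset.mem_inter.2 ⟨(IsStandard.succ_iff.1 hT).2.2 x hx,
    hT'.isLowerSet_initSeg r.le_succ hx.le hmem⟩⟩

theorem exists_common_initial [DecidableEq P] (hT : IsStandard (r + 1) T)
    (hT' : IsStandard (r + 1) T') (hset : initSeg (r + 1) T = initSeg (r + 1) T')
    (hne : T r ≠ T' r) :
    ∃ U : ℕ → P, ∃ s, r = s + 1 ∧ IsStandard s U ∧ initSeg r T = insert (T' r) (initSeg s U) ∧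
      initSeg r T' = insert (T r) (initSeg s U) ∧
      ∀ x, x < T r ∨ x < T' r → x ∈ initSeg s U := by
  obtain ⟨hmem, hlt⟩ := mem_initSeg_of_last_ne hT hT' hset hne
  obtain ⟨hmem', hlt'⟩ := mem_initSeg_of_last_ne hT' hT hset.symm hne.symm
  have hnot := hT.notMem_initSeg r.lt_succ_self
  have hnot' := hT'.notMem_initSeg r.lt_succ_self
  simp only [initSeg_succ, Finset.ext_iff, Finset.mem_insert] at hset
  obtain ⟨U, hU, hUset, -⟩ := exists_isStandard_initSeg_eq (T r)
    (D := initSeg r T ∩ initSeg r T')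
    (by simpa using (hT.isLowerSet_initSeg r.le_succ).inter (hT'.isLowerSet_initSeg r.le_succ))
  have hinsert : initSeg r T = insert (T' r) (initSeg r T ∩ initSeg r T') := by
    ext x
    have := hset x
    simp only [Finset.mem_insert, Finset.mem_inter]
    grind
  have hinsert' : initSeg r T' = insert (T r) (initSeg r T ∩ initSeg r T') := by
    ext x
    have := hset x
    simp only [Finset.mem_insert, Finset.mem_inter]
    grind
  refine ⟨U, _, ?_, hU, hUset.symm ▸ hinsert, hUset.symm ▸ hinsert', hUset.symm ▸ ?_⟩
  · have h := congrArg Finset.card hinsert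
    rwa [(hT.mono r.le_succ).card_initSeg, Finset.card_insert_of_notMem (by simp [hnot'])] at h
  · rintro x (hx | hx)
    · exact hlt x hx
    · exact Finset.inter_comm (initSeg r T) _ ▸ hlt' x hx

theorem IsStandard.exists_append_pair [DecidableEq P] {U : ℕ → P} {x y : P}
    (hU : IsStandard s U) (hx : x ∉ initSeg s U) (hy : y ∉ initSeg s U) (hxy : x ≠ y)
    (hlt : ∀ z, z < y ∨ z < x → z ∈ initSeg s U) (T : ℕ → P) :
    ∃ W, IsStandard (s + 2) W ∧ initSeg s W = initSeg s U ∧ W s = x ∧ W (s + 1) = y ∧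
      ∀ i, s + 2 ≤ i → W i = T i := by
  set U' : ℕ → P := fun i => if i < s then U i else T i with hU'
  have hagree : ∀ i < s, U i = U' i := fun i hi => by simp [hU', hi]
  have hset : initSeg s U' = initSeg s U := (initSeg_congr hagree).symm
  have hW₁ : IsStandard (s + 1) (Function.update U' s x) :=
    (hU.congr hagree).snoc (hset ▸ hx) fun z hz => hset ▸ hlt z (Or.inr hz)
  refine ⟨Function.update (Function.update U' s x) (s + 1) y, hW₁.snoc ?_ ?_, ?_, ?_, ?_, ?_⟩
  · rw [initSeg_update_self, hset]
    simp [hxy.symm, hy]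
  · intro z hz
    rw [initSeg_update_self, hset]
    exact Finset.mem_insert_of_mem (hlt z (Or.inl hz))
  · refine initSeg_congr fun i hi => ?_
    rw [Function.update_of_ne (by omega), Function.update_of_ne (by omega), hagree i hi]
  · rw [Function.update_of_ne (by omega), Function.update_self]
  · rw [Function.update_self]
  · intro i hi
    rw [Function.update_of_ne (by omega), Function.update_of_ne (by omega)]
    exact if_neg (by omega)

theorem reflTransGen_swapStep [DecidableEq P] (hT : IsStandard r T) (hT' : IsStandard r T')
    (hset : initSeg r T = initSeg r T') (htail : ∀ i, r ≤ i → T i = T' i) :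
    Relation.ReflTransGen (SwapStep r) T T' := by
  induction r generalizing T T' with
  | zero => rw [show T = T' from funext fun i => htail i i.zero_le]
  | succ r ih =>
    have ih_last {S S' : ℕ → P} (hS : IsStandard (r + 1) S) (hS' : IsStandard (r + 1) S')
        (hset : initSeg r S = initSeg r S') (htail : ∀ i, r ≤ i → S i = S' i) :
        Relation.ReflTransGen (SwapStep (r + 1)) S S' :=
      Relation.ReflTransGen.mono (fun _ _ => SwapStep.mono r.le_succ) _ _
        (ih (hS.mono r.le_succ) (hS'.mono r.le_succ) hset htail)
    by_cases hlast : T r = T' r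
    · refine ih_last hT hT' ?_ fun i hi => ?_
      · rw [← Finset.erase_insert (hT.notMem_initSeg r.lt_succ_self), ← initSeg_succ, hset, hlast,
          initSeg_succ, Finset.erase_insert (hT'.notMem_initSeg r.lt_succ_self)]
      · obtain rfl | hi := hi.eq_or_lt
        exacts [hlast, htail i hi]
    · obtain ⟨U, s, rfl, hU, hTU, hTU', hlt⟩ := exists_common_initial hT hT' hset hlast
      have hnot : T' (s + 1) ∉ initSeg s U := fun h => hT'.notMem_initSeg (s + 1).lt_succ_self
        (hTU' ▸ Finset.mem_insert_of_mem h)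
      have hnot' : T (s + 1) ∉ initSeg s U := fun h => hT.notMem_initSeg (s + 1).lt_succ_self
        (hTU ▸ Finset.mem_insert_of_mem h)
      obtain ⟨W, hW, hWU, hWs, hWs', hWT⟩ := hU.exists_append_pair hnot hnot' (Ne.symm hlast) hlt T
      have hincomp : ¬ W s < W (s + 1) := fun h => hnot (hlt _ (Or.inl (hWs ▸ hWs' ▸ h)))
      have hWset : initSeg s (swapSeq s W) = initSeg s U := by
        rw [← hWU]
        exact initSeg_congr fun i hi => swapSeq_of_ne (by omega) (by omega)
      have hTW : Relation.ReflTransGen (SwapStep (s + 1 + 1)) T W := by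
        refine ih_last hT hW (by rw [hTU, initSeg_succ s W, hWs, hWU]) fun i hi => ?_
        obtain rfl | hi := hi.eq_or_lt
        exacts [hWs'.symm, (hWT i hi).symm]
      have hWT' : Relation.ReflTransGen (SwapStep (s + 1 + 1)) (swapSeq s W) T' := by
        refine ih_last (hW.swapSeq (by omega) hincomp) hT' ?_ fun i hi => ?_
        · rw [hTU', initSeg_succ s, swapSeq_left, hWs', hWset]
        · obtain rfl | hi := hi.eq_or_lt
          · rw [swapSeq_right, hWs]
          · rw [swapSeq_of_ne (by omega) (by omega), hWT i hi, htail i hi]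
      exact (hTW.tail ⟨s, by omega, hincomp, rfl⟩).trans hWT'

end StandardSequences

section StdSeq

variable {P : Type*} [PartialOrder P] [Inhabited P] {n i : ℕ}

/-- The standard sequences of length `n`. They are encoded as functions on `ℕ` with the value
`default` from `n` on, so that a sequence is determined by its first `n` entries. -/
@[ext]
structure StdSeq (P : Type*) [PartialOrder P] [Inhabited P] (n : ℕ) where
  toFun : ℕ → P
  isStandard : IsStandard n toFun
  eq_default : ∀ i, n ≤ i → toFun i = default

namespace StdSeq

instance : CoeFun (StdSeq P n) fun _ => ℕ → P := ⟨toFun⟩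

theorem ext_of_lt {Z Z' : StdSeq P n} (h : ∀ i < n, Z i = Z' i) : Z = Z' := by
  refine StdSeq.ext (funext fun i => ?_)
  obtain hi | hi := lt_or_ge i n
  exacts [h i hi, (Z.eq_default i hi).trans (Z'.eq_default i hi).symm]

/-- The lower set enumerated by a standard sequence. -/
def shape [DecidableEq P] (Z : StdSeq P n) : Finset P := initSeg n Z

theorem exists_shape_eq [DecidableEq P] {D : Finset P} (hD : IsLowerSet (D : Set P))
    (hcard : D.card = n) : ∃ Z : StdSeq P n, Z.shape = D := by
  subst hcard
  obtain ⟨T, hT, hset, htail⟩ := exists_isStandard_initSeg_eq default hD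
  exact ⟨⟨T, hT, htail⟩, hset⟩

/-- The standard sequence obtained from `Z` by interchanging the entries at `i` and `i + 1`,
or `Z` itself if that interchange does not give a standard sequence. -/
def toggle (i : ℕ) (Z : StdSeq P n) : StdSeq P n :=
  if h : i + 1 < n ∧ ¬ Z i < Z (i + 1) then
    ⟨swapSeq i Z, Z.isStandard.swapSeq h.1 h.2, fun j hj => by
      rw [swapSeq_of_ne (by omega) (by omega), Z.eq_default j hj]⟩
  else Z

theorem coe_toggle {Z : StdSeq P n} (hi : i + 1 < n) (h : ¬ Z i < Z (i + 1)) :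
    (Z.toggle i : ℕ → P) = swapSeq i Z := by
  rw [toggle, dif_pos ⟨hi, h⟩]

theorem shape_toggle [DecidableEq P] (i : ℕ) (Z : StdSeq P n) : (Z.toggle i).shape = Z.shape := by
  unfold toggle
  split_ifs with h
  · exact initSeg_swapSeq h.1
  · rfl

theorem toggle_induction [DecidableEq P] {C : StdSeq P n → Prop} {Z Z' : StdSeq P n}
    (hshape : Z.shape = Z'.shape) (hZ : C Z)
    (htoggle : ∀ U : StdSeq P n, C U → ∀ i, i + 1 < n → ¬ U i < U (i + 1) → C (U.toggle i)) :
    C Z' := by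
  have hreach : Relation.ReflTransGen (SwapStep n) (Z : ℕ → P) Z' :=
    reflTransGen_swapStep Z.isStandard Z'.isStandard hshape
      fun i hi => (Z.eq_default i hi).trans (Z'.eq_default i hi).symm
  suffices ∀ T, Relation.ReflTransGen (SwapStep n) (Z : ℕ → P) T → ∃ U, U.toFun = T ∧ C U by
    obtain ⟨U, hU, hC⟩ := this _ hreach
    rwa [← StdSeq.ext hU]
  intro T hT
  induction hT with
  | refl => exact ⟨Z, rfl, hZ⟩
  | tail _ hstep ih =>
    obtain ⟨U, rfl, hC⟩ := ih
    obtain ⟨i, hi, hlt, rfl⟩ := hstep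
    exact ⟨U.toggle i, coe_toggle hi hlt, htoggle U hC i hi hlt⟩

end StdSeq

end StdSeq

/-! ### Boxes and contents -/

/-- A box of an `m`-tuple of Young diagrams; rows and columns are numbered from `0`. -/
@[ext]
structure Box (m : ℕ) where
  comp : Fin m
  row : ℕ
  col : ℕ
  deriving DecidableEq

namespace Box

variable {m n i j : ℕ} {x y : Box m} {D : Finset (Box m)} {T : ℕ → Box m}

/-- Boxes in different components are incomparable, so that the finite lower sets are the diagrams
of multipartitions. -/
instance : PartialOrder (Box m) where
  le x y := x.comp = y.comp ∧ x.row ≤ y.row ∧ x.col ≤ y.col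
  le_refl x := ⟨rfl, le_rfl, le_rfl⟩
  le_trans _ _ _ h h' := ⟨h.1.trans h'.1, h.2.1.trans h'.2.1, h.2.2.trans h'.2.2⟩
  le_antisymm _ _ h h' := Box.ext h.1 (h.2.1.antisymm h'.2.1) (h.2.2.antisymm h'.2.2)

instance [NeZero m] : Inhabited (Box m) := ⟨⟨0, 0, 0⟩⟩

theorem le_def : x ≤ y ↔ x.comp = y.comp ∧ x.row ≤ y.row ∧ x.col ≤ y.col := Iff.rfl

theorem lt_def : x < y ↔ x.comp = y.comp ∧ x.row ≤ y.row ∧ x.col ≤ y.col ∧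
    (x.row < y.row ∨ x.col < y.col) := by
  rw [lt_iff_le_not_ge, le_def, le_def]
  omega

/-- The box to the right of `x`. -/
def right (x : Box m) : Box m := ⟨x.comp, x.row, x.col + 1⟩

/-- The box below `x`. -/
def below (x : Box m) : Box m := ⟨x.comp, x.row + 1, x.col⟩

/-- The content of a box: column minus row. -/
def content (x : Box m) : ℤ := (x.col : ℤ) - x.row

theorem lt_right (x : Box m) : x < x.right := lt_def.2 (by simp [right])

theorem lt_below (x : Box m) : x < x.below := lt_def.2 (by simp [below])

theorem right_le_or_below_le (h : x < y) : x.right ≤ y ∨ x.below ≤ y := by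
  obtain ⟨hcomp, -, -, hlt | hlt⟩ := lt_def.1 h <;> simp only [le_def, right, below] <;>
    have := (lt_def.1 h) <;> omega

theorem covBy_iff : x ⋖ y ↔ y = x.right ∨ y = x.below := by
  refine ⟨fun h => ?_, ?_⟩
  · obtain hle | hle := right_le_or_below_le h.lt
    · exact Or.inl ((h.eq_or_eq x.lt_right.le hle).resolve_left x.lt_right.ne').symm
    · exact Or.inr ((h.eq_or_eq x.lt_below.le hle).resolve_left x.lt_below.ne').symm
  · rintro (rfl | rfl)
    · refine ⟨x.lt_right, fun z hz hz' => ?_⟩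
      simp only [lt_def, right] at hz hz'
      omega
    · refine ⟨x.lt_below, fun z hz hz' => ?_⟩
      simp only [lt_def, below] at hz hz'
      omega

theorem right_ne_below (x : Box m) : x.right ≠ x.below := fun h => by
  simpa [right, below] using congrArg row h

/-- The contents of the boxes of `D` in the component `c`. -/
def contents (D : Finset (Box m)) (c : Fin m) : Finset ℤ :=
  (D.filter fun x => x.comp = c).image content

-- A lower set contains with `x` its arm towards the corner and the part of the first row or column
-- on the same side of the diagonal.
theorem uIcc_subset_contents (hD : IsLowerSet (D : Set (Box m))) (hx : x ∈ D) :
    Finset.uIcc 0 x.content ⊆ contents D x.comp := by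
  intro t ht
  simp only [Finset.mem_uIcc, content] at ht
  refine Finset.mem_image.2 ⟨⟨x.comp, (-t).toNat, t.toNat⟩, Finset.mem_filter.2 ⟨?_, rfl⟩, ?_⟩
  · refine hD (show _ ≤ x from ⟨rfl, ?_, ?_⟩) hx <;> dsimp only <;> omega
  · simp only [content]
    omega

theorem sum_card_contents_le (D : Finset (Box m)) (s : Finset (Fin m)) :
    ∑ c ∈ s, (contents D c).card ≤ D.card :=
  calc ∑ c ∈ s, (contents D c).card
      ≤ ∑ c ∈ s, (D.filter fun x => x.comp = c).card :=
        Finset.sum_le_sum fun _ _ => Finset.card_image_le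
    _ = (D.filter fun x => x.comp ∈ s).card := Finset.sum_card_fiberwise_eq_card_filter D s comp
    _ ≤ D.card := Finset.card_filter_le _ _

theorem natAbs_content_sub_lt (hD : IsLowerSet (D : Set (Box m))) (hx : x ∈ D) (hy : y ∈ D)
    (hxy : x.comp = y.comp) : (y.content - x.content).natAbs < D.card := by
  have hsub : Finset.uIcc x.content y.content ⊆ contents D x.comp := by
    intro t ht
    have hcover : t ∈ Finset.uIcc 0 x.content ∨ t ∈ Finset.uIcc 0 y.content := by
      simp only [Finset.mem_uIcc] at ht ⊢
      omega
    exact hcover.elim (fun h => uIcc_subset_contents hD hx h)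
      fun h => hxy ▸ uIcc_subset_contents hD hy h
  have hcard := Finset.card_le_card hsub
  have hle := sum_card_contents_le D {x.comp}
  rw [Int.card_uIcc] at hcard
  rw [Finset.sum_singleton] at hle
  omega

theorem natAbs_content_sub_add_two_le (hD : IsLowerSet (D : Set (Box m))) (hx : x ∈ D)
    (hy : y ∈ D) (hxy : x.comp ≠ y.comp) : (y.content - x.content).natAbs + 2 ≤ D.card := by
  have hcard := Finset.card_le_card (uIcc_subset_contents hD hx)
  have hcard' := Finset.card_le_card (uIcc_subset_contents hD hy)
  have hle := sum_card_contents_le D {x.comp, y.comp}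
  rw [Int.card_uIcc] at hcard hcard'
  rw [Finset.sum_pair hxy] at hle
  omega

/-- Two boxes that are different enough for the seminormal coefficients to be defined under the
separation conditions on the parameters in degree `n`. -/
structure Sep (n : ℕ) (x y : Box m) : Prop where
  content_ne : x.comp = y.comp → x.content ≠ y.content
  natAbs_lt : x.comp = y.comp → (y.content - x.content).natAbs < n
  natAbs_add_two_le : x.comp ≠ y.comp → (y.content - x.content).natAbs + 2 ≤ n

theorem Sep.symm (h : Sep n x y) : Sep n y x where
  content_ne e := (h.content_ne e.symm).symm
  natAbs_lt e := by have := h.natAbs_lt e.symm; omega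
  natAbs_add_two_le e := by have := h.natAbs_add_two_le e.symm; omega

-- If `T j` lies strictly below and to the right of `T i`, then two further boxes are filled between
-- `T i` and `T j`.
theorem add_three_le_of_row_lt_of_col_lt (hT : IsStandard n T) (hij : i < j) (hj : j < n)
    (hcomp : (T i).comp = (T j).comp) (hrow : (T i).row < (T j).row)
    (hcol : (T i).col < (T j).col) : i + 3 ≤ j := by
  have between (x : Box m) (hx : T i < x) (hxj : x < T j) : ∃ l, i < l ∧ l < j ∧ T l = x := by
    obtain ⟨l, hl, rfl⟩ := hT.exists_of_lt j hj x hxj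
    refine ⟨l, lt_of_not_ge fun hli => ?_, hl, rfl⟩
    obtain rfl | hli := hli.eq_or_lt
    · exact hx.false
    · exact hT.not_le hli (hij.trans hj) hx.le
  obtain ⟨l, hil, hlj, hl⟩ := between (T i).right (lt_right _)
    (lt_def.2 (by simp only [right]; omega))
  obtain ⟨l', hil', hlj', hl'⟩ := between (T i).below (lt_below _)
    (lt_def.2 (by simp only [below]; omega))
  have hne : l ≠ l' := by
    rintro rfl
    exact right_ne_below _ (hl.symm.trans hl')
  omega

theorem sep_of_isStandard (hT : IsStandard n T) (hij : i < j) (hj : j < n) (hji : j ≤ i + 2) :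
    Sep n (T i) (T j) := by
  have hlower := hT.isLowerSet_initSeg le_rfl
  have hi : T i ∈ initSeg n T := mem_initSeg.2 ⟨i, hij.trans hj, rfl⟩
  have hj' : T j ∈ initSeg n T := mem_initSeg.2 ⟨j, hj, rfl⟩
  refine ⟨fun hcomp hcontent => ?_, fun hcomp => ?_, fun hcomp => ?_⟩
  · have hnot := hT.not_le hij hj
    have hfar := add_three_le_of_row_lt_of_col_lt hT hij hj hcomp
    simp only [le_def, content] at hnot hcontent
    omega
  · simpa only [hT.card_initSeg] using natAbs_content_sub_lt hlower hi hj' hcomp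
  · simpa only [hT.card_initSeg] using natAbs_content_sub_add_two_le hlower hi hj' hcomp

theorem lt_of_natAbs_content_sub_eq_one (hT : IsStandard n T) (hi : i + 1 < n)
    (hcomp : (T i).comp = (T (i + 1)).comp)
    (h : ((T (i + 1)).content - (T i).content).natAbs = 1) : T i < T (i + 1) := by
  have hnot := hT.not_le (lt_add_one i) hi
  have hfar := add_three_le_of_row_lt_of_col_lt hT (lt_add_one i) hi hcomp
  simp only [le_def, content, lt_def] at *
  omega

end Box

/-! ### Counting pairs of standard sequences of the same shape -/

section Differential

variable {P : Type*} [PartialOrder P] {D : Finset P} {x y : P} {m r : ℕ}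

/-- The elements whose removal from a lower set leaves a lower set. -/
def removable (D : Finset P) : Finset P := D.filter fun x => Maximal (· ∈ D) x

/-- The elements that can be added to a lower set so that it remains one. The value is junk when
there are infinitely many of them. -/
def addable (D : Finset P) : Finset P :=
  if h : {y | Minimal (· ∉ D) y}.Finite then h.toFinset else ∅

/-- The finite lower sets of `P` form an `m`-differential poset in the sense of Stanley. -/
structure IsDifferential (P : Type*) [PartialOrder P] (m : ℕ) : Prop where
  finite_minimal_notMem : ∀ D : Finset P, IsLowerSet (D : Set P) → {y | Minimal (· ∉ D) y}.Finite
  card_addable : ∀ D : Finset P, IsLowerSet (D : Set P) →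
    (addable D).card = (removable D).card + m

theorem mem_removable : x ∈ removable D ↔ Maximal (· ∈ D) x := by
  simp [removable, and_iff_right_of_imp Maximal.prop]

theorem IsDifferential.mem_addable (hP : IsDifferential P m) (hD : IsLowerSet (D : Set P)) :
    y ∈ addable D ↔ Minimal (· ∉ D) y := by
  simp [addable, hP.finite_minimal_notMem D hD]

variable [DecidableEq P]

theorem isLowerSet_insert_of_minimal (hD : IsLowerSet (D : Set P)) (hy : Minimal (· ∉ D) y) :
    IsLowerSet ((insert y D : Finset P) : Set P) := by
  intro a b hba ha
  obtain rfl | ha := Finset.mem_insert.1 ha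
  · obtain rfl | hlt := hba.eq_or_lt
    exacts [Finset.mem_insert_self _ _,
      Finset.mem_insert_of_mem (not_not.1 (hy.not_prop_of_lt hlt))]
  · exact Finset.mem_insert_of_mem (hD hba ha)

theorem isLowerSet_erase_of_maximal (hD : IsLowerSet (D : Set P)) (hx : Maximal (· ∈ D) x) :
    IsLowerSet ((D.erase x : Finset P) : Set P) := by
  intro a b hba ha
  obtain ⟨hax, haD⟩ := Finset.mem_erase.1 ha
  refine Finset.mem_erase.2 ⟨?_, hD hba haD⟩
  rintro rfl
  exact hax (hx.eq_of_ge haD hba)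

theorem minimal_notMem_erase (hD : IsLowerSet (D : Set P)) (hx : x ∈ D) :
    Minimal (· ∉ D.erase x) x :=
  minimal_iff_forall_lt.2 ⟨Finset.notMem_erase x D, fun _ hlt hnot =>
    hnot (Finset.mem_erase.2 ⟨hlt.ne, hD hlt.le hx⟩)⟩

theorem maximal_mem_insert (hD : IsLowerSet (D : Set P)) (hy : y ∉ D) :
    Maximal (· ∈ insert y D) y :=
  maximal_iff_forall_gt.2 ⟨Finset.mem_insert_self y D, fun _ hlt hmem =>
    hy (hD hlt.le ((Finset.mem_insert.1 hmem).resolve_left hlt.ne'))⟩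

theorem minimal_and_maximal_insert_iff (hxy : x ≠ y) :
    Minimal (· ∉ D) y ∧ Maximal (· ∈ insert y D) x ↔
      Maximal (· ∈ D) x ∧ Minimal (· ∉ D.erase x) y := by
  simp only [minimal_iff_forall_lt, maximal_iff_forall_gt, Finset.mem_insert, Finset.mem_erase]
  grind

theorem sum_addable_sum_removable_comm (hP : IsDifferential P m) (hD : IsLowerSet (D : Set P))
    (f : Finset P → ℕ) :
    ∑ y ∈ addable D, ∑ x ∈ (removable (insert y D)).erase y, f ((insert y D).erase x) =
      ∑ x ∈ removable D, ∑ y ∈ (addable (D.erase x)).erase x, f (insert y (D.erase x)) := by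
  rw [Finset.sum_comm' (s' := fun x => (addable (D.erase x)).erase x) (t' := removable D)]
  · refine Finset.sum_congr rfl fun x _ => Finset.sum_congr rfl fun y hy => ?_
    rw [Finset.erase_insert_of_ne (Finset.ne_of_mem_erase hy)]
  · intro y x
    obtain rfl | hxy := eq_or_ne x y
    · simp
    simp only [Finset.mem_erase, mem_removable, hP.mem_addable hD, hxy, hxy.symm, ne_eq,
      not_false_eq_true, true_and]
    rw [minimal_and_maximal_insert_iff hxy, and_comm]
    exact and_congr_left fun hx => (hP.mem_addable (isLowerSet_erase_of_maximal hD hx)).symm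

-- The commutation relation `DU = UD + m` of a differential poset, evaluated on `f`.
theorem sum_addable_sum_removable (hP : IsDifferential P m) (hD : IsLowerSet (D : Set P))
    (f : Finset P → ℕ) :
    ∑ y ∈ addable D, ∑ x ∈ removable (insert y D), f ((insert y D).erase x) =
      (∑ x ∈ removable D, ∑ y ∈ addable (D.erase x), f (insert y (D.erase x))) + m * f D := by
  have hup : ∀ y ∈ addable D, ∑ x ∈ removable (insert y D), f ((insert y D).erase x) =
      f D + ∑ x ∈ (removable (insert y D)).erase y, f ((insert y D).erase x) := fun y hy => by
    have hyD := ((hP.mem_addable hD).1 hy).prop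
    rw [← Finset.add_sum_erase _ _ (mem_removable.2 (maximal_mem_insert hD hyD)),
      Finset.erase_insert hyD]
  have hdown : ∀ x ∈ removable D, ∑ y ∈ addable (D.erase x), f (insert y (D.erase x)) =
      f D + ∑ y ∈ (addable (D.erase x)).erase x, f (insert y (D.erase x)) := fun x hx => by
    have hxD := mem_removable.1 hx
    rw [← Finset.add_sum_erase _ _ ((hP.mem_addable (isLowerSet_erase_of_maximal hD hxD)).2
      (minimal_notMem_erase hD hxD.prop)), Finset.insert_erase hxD.prop]
  rw [Finset.sum_congr rfl hup, Finset.sum_congr rfl hdown, Finset.sum_add_distrib,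
    Finset.sum_add_distrib, sum_addable_sum_removable_comm hP hD, Finset.sum_const,
    Finset.sum_const, hP.card_addable D hD, smul_eq_mul, smul_eq_mul]
  ring

namespace StdSeq

variable [Inhabited P] {n : ℕ}

theorem isLowerSet_shape (Z : StdSeq P n) : IsLowerSet (Z.shape : Set P) :=
  Z.isStandard.isLowerSet_initSeg le_rfl

theorem card_shape (Z : StdSeq P n) : Z.shape.card = n := Z.isStandard.card_initSeg

/-- The first `n` entries of a standard sequence of length `n + 1`. -/
def init (Z : StdSeq P (n + 1)) : StdSeq P n where
  toFun := Function.update Z n default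
  isStandard := (Z.isStandard.mono n.le_succ).congr fun i hi =>
    (Function.update_of_ne hi.ne _ _).symm
  eq_default i hi := by
    obtain rfl | hi := hi.eq_or_lt
    · exact Function.update_self _ _ _
    · rw [Function.update_of_ne hi.ne', Z.eq_default i hi]

/-- A standard sequence extended by one element that is addable to its shape. -/
def snoc (Z : StdSeq P n) (y : P) (hy : Minimal (· ∉ Z.shape) y) : StdSeq P (n + 1) where
  toFun := Function.update Z n y
  isStandard := Z.isStandard.snoc hy.prop fun _ hlt => not_not.1 (hy.not_prop_of_lt hlt)
  eq_default i hi := by rw [Function.update_of_ne (by omega), Z.eq_default i (by omega)]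

theorem shape_snoc (Z : StdSeq P n) {y : P} (hy : Minimal (· ∉ Z.shape) y) :
    (Z.snoc y hy).shape = insert y Z.shape := initSeg_update_self Z n y

theorem shape_init (Z : StdSeq P (n + 1)) : Z.init.shape = initSeg n Z :=
  initSeg_congr fun _ hi => Function.update_of_ne hi.ne _ _

theorem minimal_notMem_shape_init (Z : StdSeq P (n + 1)) : Minimal (· ∉ Z.init.shape) (Z n) := by
  rw [shape_init, minimal_iff_forall_lt]
  obtain ⟨-, hnot, hlt⟩ := IsStandard.succ_iff.1 Z.isStandard
  exact ⟨hnot, fun x hx => not_not.2 (hlt x hx)⟩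

/-- A standard sequence of length `n + 1` consists of its first `n` entries and its last one. -/
def succEquiv : StdSeq P (n + 1) ≃ Σ Z : StdSeq P n, {y // Minimal (· ∉ Z.shape) y} where
  toFun Z := ⟨Z.init, Z n, Z.minimal_notMem_shape_init⟩
  invFun p := p.1.snoc p.2 p.2.2
  left_inv Z := StdSeq.ext (by simp [snoc, init])
  right_inv := by
    rintro ⟨Z, y, hy⟩
    have hinit : (Z.snoc y hy).init = Z := StdSeq.ext (by
      simp [snoc, init, ← Z.eq_default n le_rfl])
    exact Sigma.subtype_ext hinit (by simp [snoc])

instance : Subsingleton (StdSeq P 0) := ⟨fun _ _ => ext_of_lt fun i hi => absurd hi i.not_lt_zero⟩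

instance : Nonempty (StdSeq P 0) := ⟨⟨fun _ => default, ⟨by simp, by simp⟩, fun _ _ => rfl⟩⟩

theorem finite_of_isDifferential {Q : Type*} [PartialOrder Q] [Inhabited Q]
    (hQ : IsDifferential Q m) : Finite (StdSeq Q n) := by
  classical
  induction n with
  | zero => infer_instance
  | succ n ih =>
    have hfin (Z : StdSeq Q n) : Finite {y // Minimal (· ∉ Z.shape) y} :=
      hQ.finite_minimal_notMem _ Z.isLowerSet_shape
    exact Finite.of_equiv _ succEquiv.symm

theorem sum_shape_succ [∀ n, Fintype (StdSeq P n)] (hP : IsDifferential P m)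
    (f : Finset P → ℕ) :
    ∑ Z : StdSeq P (n + 1), f Z.shape =
      ∑ Z : StdSeq P n, ∑ y ∈ addable Z.shape, f (insert y Z.shape) := by
  have (Z : StdSeq P n) : Fintype {y // Minimal (· ∉ Z.shape) y} :=
    (hP.finite_minimal_notMem _ Z.isLowerSet_shape).fintype
  rw [← succEquiv.symm.sum_comp, Fintype.sum_sigma]
  refine Finset.sum_congr rfl fun Z _ => ?_
  rw [Finset.sum_subtype _ fun y => hP.mem_addable Z.isLowerSet_shape]
  exact Finset.sum_congr rfl fun y _ => congrArg f (Z.shape_snoc y.2)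

/-- The number of standard sequences of length `n` and given shape. -/
def numShape (n : ℕ) (D : Finset P) : ℕ := Nat.card {Z : StdSeq P n // Z.shape = D}

theorem numShape_zero (Z : StdSeq P 0) : numShape 0 Z.shape = 1 :=
  Nat.card_eq_one_iff_unique.2 ⟨inferInstance, ⟨Z, rfl⟩⟩

theorem numShape_eq_sum [Fintype (StdSeq P n)] (D : Finset P) :
    numShape n D = ∑ Z : StdSeq P n, if Z.shape = D then 1 else 0 := by
  rw [numShape, Nat.card_eq_fintype_card, Fintype.card_subtype, Finset.card_filter]

theorem numShape_succ (hP : IsDifferential P m) (hD : IsLowerSet (D : Set P)) :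
    numShape (n + 1) D = ∑ x ∈ removable D, numShape n (D.erase x) := by
  have (n : ℕ) : Fintype (StdSeq P n) := @Fintype.ofFinite _ (finite_of_isDifferential hP)
  simp only [numShape_eq_sum]
  rw [sum_shape_succ hP fun E => if E = D then 1 else 0, Finset.sum_comm]
  refine Finset.sum_congr rfl fun Z _ => ?_
  rw [← Finset.card_filter, ← Finset.card_filter]
  congr 1
  ext y
  simp only [Finset.mem_filter, mem_removable, hP.mem_addable Z.isLowerSet_shape]
  constructor
  · rintro ⟨hy, rfl⟩
    exact ⟨maximal_mem_insert Z.isLowerSet_shape hy.prop, (Finset.erase_insert hy.prop).symm⟩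
  · rintro ⟨hy, hZ⟩
    rw [hZ]
    exact ⟨minimal_notMem_erase hD hy.prop, Finset.insert_erase hy.prop⟩

theorem sum_addable_numShape_succ (hP : IsDifferential P m) (hD : IsLowerSet (D : Set P)) :
    ∑ y ∈ addable D, numShape (n + 1) (insert y D) =
      (∑ x ∈ removable D, ∑ y ∈ addable (D.erase x), numShape n (insert y (D.erase x))) +
        m * numShape n D := by
  rw [← sum_addable_sum_removable hP hD]
  exact Finset.sum_congr rfl fun y hy =>
    numShape_succ hP (isLowerSet_insert_of_minimal hD ((hP.mem_addable hD).1 hy))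

theorem sum_addable_numShape (hP : IsDifferential P m) (hD : IsLowerSet (D : Set P))
    (hcard : D.card = n) :
    ∑ y ∈ addable D, numShape (n + 1) (insert y D) = m * (n + 1) * numShape n D := by
  rw [sum_addable_numShape_succ hP hD]
  induction n generalizing D with
  | zero =>
    obtain rfl := Finset.card_eq_zero.1 hcard
    simp [removable]
  | succ n ih =>
    have hstep : ∀ x ∈ removable D, ∑ y ∈ addable (D.erase x), numShape (n + 1)
        (insert y (D.erase x)) = m * (n + 1) * numShape n (D.erase x) := fun x hx => by
      have hx := mem_removable.1 hx
      have hlower := isLowerSet_erase_of_maximal hD hx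
      rw [sum_addable_numShape_succ hP hlower]
      exact ih hlower (by rw [Finset.card_erase_of_mem hx.prop, hcard, Nat.add_sub_cancel])
    rw [Finset.sum_congr rfl hstep, ← Finset.mul_sum, ← numShape_succ hP hD]
    ring

theorem sum_numShape_shape [∀ n, Fintype (StdSeq P n)] (hP : IsDifferential P m) (n : ℕ) :
    ∑ Z : StdSeq P n, numShape n Z.shape = m ^ n * n.factorial := by
  induction n with
  | zero =>
    rw [Fintype.sum_subsingleton _ (Classical.arbitrary (StdSeq P 0)), numShape_zero]
    rfl
  | succ n ih =>
    have hstep (Z : StdSeq P n) : ∑ y ∈ addable Z.shape, numShape (n + 1) (insert y Z.shape) =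
        m * (n + 1) * numShape n Z.shape :=
      sum_addable_numShape hP Z.isLowerSet_shape Z.card_shape
    rw [sum_shape_succ hP (numShape (n + 1)), Finset.sum_congr rfl fun Z _ => hstep Z,
      ← Finset.mul_sum, ih, Nat.factorial_succ]
    ring

end StdSeq

end Differential

namespace Box

variable {m a b : ℕ} {c : Fin m} {x y : Box m} {D : Finset (Box m)}

/-- The number of boxes of `D` in row `a` of the component `c`. -/
def rowLength (D : Finset (Box m)) (c : Fin m) (a : ℕ) : ℕ :=
  (D.filter fun x => x.comp = c ∧ x.row = a).card

theorem mem_iff_lt_rowLength (hD : IsLowerSet (D : Set (Box m))) :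
    ⟨c, a, b⟩ ∈ D ↔ b < rowLength D c a := by
  set row := D.filter fun x => x.comp = c ∧ x.row = a with hrow
  have hcard : rowLength D c a = (row.image col).card := by
    refine (Finset.card_image_of_injOn fun x hx y hy hxy => ?_).symm
    rw [Finset.mem_coe, Finset.mem_filter] at hx hy
    exact Box.ext (hx.2.1.trans hy.2.1.symm) (hx.2.2.trans hy.2.2.symm) hxy
  have hmem (b : ℕ) : b ∈ row.image col ↔ ⟨c, a, b⟩ ∈ D := by
    simp only [hrow, Finset.mem_image, Finset.mem_filter]
    refine ⟨?_, fun h => ⟨_, ⟨h, rfl, rfl⟩, rfl⟩⟩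
    rintro ⟨x, ⟨hx, rfl, rfl⟩, rfl⟩
    exact hx
  have hlower {b b' : ℕ} (hle : b' ≤ b) (hb : b ∈ row.image col) : b' ∈ row.image col :=
    (hmem b').2 (hD (show (⟨c, a, b'⟩ : Box m) ≤ ⟨c, a, b⟩ from ⟨rfl, le_rfl, hle⟩) ((hmem b).1 hb))
  rw [hcard, ← hmem]
  constructor
  · intro hb
    have hsub : Finset.range (b + 1) ⊆ row.image col := fun b' hb' =>
      hlower (Nat.lt_succ_iff.1 (Finset.mem_range.1 hb')) hb
    simpa using Finset.card_le_card hsub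
  · contrapose!
    intro hb
    have hsub : row.image col ⊆ Finset.range b := fun b' hb' =>
      Finset.mem_range.2 (not_le.1 fun hle => hb (hlower hle hb'))
    simpa using Finset.card_le_card hsub

theorem rowLength_antitone (hD : IsLowerSet (D : Set (Box m))) (c : Fin m) :
    Antitone (rowLength D c) := fun a a' haa' => by
  refine Nat.le_of_not_lt fun hlt => (lt_irrefl (rowLength D c a)) ?_
  rw [← mem_iff_lt_rowLength hD] at hlt ⊢
  exact hD (show (⟨c, a, _⟩ : Box m) ≤ ⟨c, a', _⟩ from ⟨rfl, haa', le_rfl⟩) hlt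

theorem maximal_mem_iff (hD : IsLowerSet (D : Set (Box m))) :
    Maximal (· ∈ D) x ↔
      rowLength D x.comp x.row = x.col + 1 ∧ rowLength D x.comp (x.row + 1) ≤ x.col := by
  have hmem (y : Box m) : y ∈ D ↔ y.col < rowLength D y.comp y.row := mem_iff_lt_rowLength hD
  rw [maximal_iff_forall_gt, hmem]
  constructor
  · rintro ⟨hx, hgt⟩
    have hright := mt (hmem _).2 (hgt x.lt_right)
    have hbelow := mt (hmem _).2 (hgt x.lt_below)
    simp only [right, below] at hright hbelow
    omega
  · rintro ⟨hright, hbelow⟩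
    refine ⟨by omega, fun y hxy hy => ?_⟩
    obtain hle | hle := right_le_or_below_le hxy
    · have := (hmem _).1 (hD hle hy)
      simp only [right] at this
      omega
    · have := (hmem _).1 (hD hle hy)
      simp only [below] at this
      omega

theorem minimal_notMem_iff (hD : IsLowerSet (D : Set (Box m))) :
    Minimal (· ∉ D) y ↔ y.col = rowLength D y.comp y.row ∧
      ∀ a, y.row = a + 1 → y.col < rowLength D y.comp a := by
  have hmem (x : Box m) : x ∈ D ↔ x.col < rowLength D x.comp x.row := mem_iff_lt_rowLength hD
  rw [minimal_iff_forall_lt, hmem]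
  constructor
  · rintro ⟨hy, hlt⟩
    refine ⟨(not_lt.1 hy).antisymm' (not_lt.1 fun hcol => ?_), fun a ha => ?_⟩
    · have : (⟨y.comp, y.row, rowLength D y.comp y.row⟩ : Box m) ∈ D :=
        not_not.1 (hlt (lt_def.2 ⟨rfl, le_rfl, hcol.le, Or.inr hcol⟩))
      exact lt_irrefl _ ((hmem _).1 this)
    · exact (hmem ⟨y.comp, a, y.col⟩).1
        (not_not.1 (hlt (lt_def.2 ⟨rfl, by simp [ha], le_rfl, Or.inl (by simp [ha])⟩)))
  · rintro ⟨hcol, hrow⟩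
    refine ⟨hcol.ge.not_gt, fun x hxy => not_not.2 ((hmem x).2 ?_)⟩
    obtain ⟨hcomp, hle, hle', hlt⟩ := lt_def.1 hxy
    obtain heq | hlt_row := hle.eq_or_lt
    · rw [hcomp, heq]
      omega
    · have hlast := hrow (y.row - 1) (by omega)
      have hanti := rowLength_antitone hD y.comp (Nat.le_sub_one_of_lt hlt_row)
      rw [hcomp]
      omega

/-- The candidates for addable boxes of `D`: one in the first row of every component and one below
the row of every removable box. -/
def rowEnds (D : Finset (Box m)) : Finset (Box m) :=
  (removable D).image (fun x => ⟨x.comp, x.row + 1, rowLength D x.comp (x.row + 1)⟩) ∪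
    Finset.univ.image fun c => ⟨c, 0, rowLength D c 0⟩

theorem mem_rowEnds (hD : IsLowerSet (D : Set (Box m))) :
    y ∈ rowEnds D ↔ Minimal (· ∉ D) y := by
  simp only [rowEnds, Finset.mem_union, Finset.mem_image, mem_removable, maximal_mem_iff hD,
    Finset.mem_univ, true_and, minimal_notMem_iff hD]
  constructor
  · rintro (⟨x, hx, rfl⟩ | ⟨c, rfl⟩)
    · refine ⟨rfl, fun a ha => ?_⟩
      obtain rfl : x.row = a := by simpa using ha
      simp only
      omega
    · exact ⟨rfl, by simp⟩
  · rintro ⟨hcol, hrow⟩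
    obtain ⟨c, a, b⟩ := y
    obtain _ | a := a
    · exact Or.inr ⟨c, by simpa using hcol.symm⟩
    · have hlt := hrow a rfl
      simp only at hcol hlt
      exact Or.inl ⟨⟨c, a, rowLength D c a - 1⟩, ⟨by simp only; omega, by simp only; omega⟩,
        by simpa using hcol.symm⟩

theorem card_rowEnds (hD : IsLowerSet (D : Set (Box m))) :
    (rowEnds D).card = (removable D).card + m := by
  rw [rowEnds, Finset.card_union_of_disjoint, Finset.card_image_of_injOn,
    Finset.card_image_of_injective, Finset.card_univ, Fintype.card_fin]
  · exact fun c c' h => congrArg comp h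
  · intro x hx x' hx' h
    obtain ⟨hcomp, hrow, -⟩ : x.comp = x'.comp ∧ x.row = x'.row ∧ _ := by simpa using h
    have hx := (maximal_mem_iff hD).1 (mem_removable.1 hx)
    have hx' := (maximal_mem_iff hD).1 (mem_removable.1 hx')
    rw [hcomp, hrow] at hx
    exact Box.ext hcomp hrow (by omega)
  · simp [Finset.disjoint_left]

theorem isDifferential : IsDifferential (Box m) m where
  finite_minimal_notMem D hD := (rowEnds D).finite_toSet.subset fun _ hy => (mem_rowEnds hD).2 hy
  card_addable D hD := by
    have heq : addable D = rowEnds D := by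
      have hfin : {y | Minimal (· ∉ D) y}.Finite :=
        (rowEnds D).finite_toSet.subset fun _ hy => (mem_rowEnds hD).2 hy
      ext y
      simp [addable, hfin, mem_rowEnds hD]
    rw [heq, card_rowEnds hD]

end Box

instance {m n : ℕ} [NeZero m] : Finite (StdSeq (Box m) n) :=
  StdSeq.finite_of_isDifferential Box.isDifferential

/-! ### Seminormal coefficients -/

section Coefficients

variable {F : Type*} [Field F] {m n : ℕ} {v : Fin m → F} {q : F} {x y z : Box m}

/-- The separation conditions on the parameters in degree `n`. -/
structure IsSeparated (n : ℕ) (v : Fin m → F) (q : F) : Prop where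
  q_ne_zero : q ≠ 0
  zpow_mul_sub_ne_zero : ∀ i : ℤ, i.natAbs < n → ∀ j j' : Fin m, j ≠ j' → q ^ i * v j - v j' ≠ 0
  geom_sum_ne_zero : ∀ i : ℕ, 1 ≤ i → i < n → ∑ j ∈ Finset.range (i + 1), q ^ j ≠ 0

/-- The `q`-integer `[d] = (q ^ d - 1) / (q - 1)`, also for negative `d` and for `q = 1`. -/
def qInt (q : F) (d : ℤ) : F := if q = 1 then d else (q ^ d - 1) / (q - 1)

theorem zpow_eq_one_add_mul_qInt (q : F) (d : ℤ) : q ^ d = 1 + (q - 1) * qInt q d := by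
  unfold qInt
  split_ifs with h
  · simp [h]
  · rw [mul_div_cancel₀ _ (sub_ne_zero.2 h)]
    ring

theorem qInt_add (hq : q ≠ 0) (a b : ℤ) : qInt q (a + b) = qInt q a + q ^ a * qInt q b := by
  unfold qInt
  split_ifs with h
  · simp [h]
  · have := sub_ne_zero.2 h
    rw [zpow_add₀ hq]
    field_simp
    ring

theorem qInt_zero (q : F) : qInt q 0 = 0 := by simp [qInt]

theorem qInt_natCast (q : F) (d : ℕ) : qInt q d = ∑ j ∈ Finset.range d, q ^ j := by
  unfold qInt
  split_ifs with h
  · simp [h]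
  · rw [geom_sum_eq h, zpow_natCast]

theorem qInt_one (q : F) : qInt q 1 = 1 := by simpa using qInt_natCast q 1

theorem qInt_eq_neg_zpow_mul (hq : q ≠ 0) (a : ℤ) : qInt q a = -(q ^ a * qInt q (-a)) := by
  have h := qInt_add hq a (-a)
  rw [add_neg_cancel, qInt_zero] at h
  exact eq_neg_of_add_eq_zero_left h.symm

theorem IsSeparated.qInt_ne_zero (hs : IsSeparated n v q) {d : ℤ} (hd : d ≠ 0)
    (hdn : d.natAbs ≤ n) : qInt q d ≠ 0 := by
  have natCast_ne_zero (e : ℕ) (he : e ≠ 0) (hen : e ≤ n) : qInt q (e : ℤ) ≠ 0 := by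
    rw [qInt_natCast]
    obtain _ | _ | e := e
    · exact absurd rfl he
    · simp
    · exact hs.geom_sum_ne_zero (e + 1) (by omega) (by omega)
  obtain ⟨e, rfl | rfl⟩ := d.eq_nat_or_neg
  · exact natCast_ne_zero e (by omega) (by omega)
  · rw [qInt_eq_neg_zpow_mul hs.q_ne_zero, neg_neg]
    exact neg_ne_zero.2 (mul_ne_zero (zpow_ne_zero _ hs.q_ne_zero)
      (natCast_ne_zero e (by omega) (by omega)))

/-- The residue `v_c q ^ (col - row)` of a box in the component `c`. -/
def residue (v : Fin m → F) (q : F) (x : Box m) : F := v x.comp * q ^ x.content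

/-- The diagonal entry of the seminormal matrix of `a_{i+1}` at a tableau with the entries `i - 1`
and `i` in the boxes `x` and `y`. For boxes in one component with nonzero residues and `q ≠ 1`
the second formula simplifies to the first, which has no denominator `residue y - residue x`. -/
def diagCoeff (v : Fin m → F) (q : F) (x y : Box m) : F :=
  if x.comp = y.comp then q - 1 + (qInt q (y.content - x.content))⁻¹
  else (q - 1) * residue v q y / (residue v q y - residue v q x)

/-- The off-diagonal entry of the seminormal matrix of `a_{i+1}` at a tableau with the entries
`i - 1` and `i` in the boxes `x` and `y`. -/
def offDiagCoeff (v : Fin m → F) (q : F) (x y : Box m) : F :=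
  if x ⋖ y then 0 else 1 + diagCoeff v q x y

theorem diagCoeff_right (v : Fin m → F) (q : F) (x : Box m) : diagCoeff v q x x.right = q := by
  have hcontent : x.right.content - x.content = 1 := by simp [Box.content, Box.right]
  rw [diagCoeff, if_pos (by rfl), hcontent, qInt_one]
  ring

theorem diagCoeff_below (v : Fin m → F) (hq : q ≠ 0) (x : Box m) :
    diagCoeff v q x x.below = -1 := by
  have hcontent : x.below.content - x.content = -1 := by simp [Box.content, Box.below]
  rw [diagCoeff, if_pos (by rfl), hcontent, qInt_eq_neg_zpow_mul hq, neg_neg, qInt_one, mul_one,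
    inv_neg, zpow_neg_one, inv_inv]
  ring

theorem residue_eq_mul_of_comp_eq (v : Fin m → F) (hq : q ≠ 0) (h : x.comp = y.comp) :
    residue v q y = residue v q x * (1 + (q - 1) * qInt q (y.content - x.content)) := by
  rw [← zpow_eq_one_add_mul_qInt, residue, residue, h, mul_assoc, ← zpow_add₀ hq,
    add_sub_cancel]

theorem IsSeparated.zpow_mul_residue_sub_ne_zero (hs : IsSeparated n v q)
    (hxy : x.comp ≠ y.comp) {e : ℤ} (he : (y.content + e - x.content).natAbs < n) :
    q ^ e * residue v q y - residue v q x ≠ 0 := by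
  have hfactor : q ^ e * residue v q y - residue v q x =
      (q ^ (y.content + e - x.content) * v y.comp - v x.comp) * q ^ x.content := by
    rw [sub_mul, mul_right_comm, ← zpow_add₀ hs.q_ne_zero, sub_add_cancel,
      zpow_add₀ hs.q_ne_zero, residue, residue]
    ring
  rw [hfactor]
  exact mul_ne_zero (hs.zpow_mul_sub_ne_zero _ he _ _ hxy.symm) (zpow_ne_zero _ hs.q_ne_zero)

namespace Box.Sep

theorem qInt_ne_zero (h : Sep n x y) (hs : IsSeparated n v q) (hxy : x.comp = y.comp) :
    qInt q (y.content - x.content) ≠ 0 :=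
  hs.qInt_ne_zero (sub_ne_zero.2 (h.content_ne hxy).symm) (h.natAbs_lt hxy).le

theorem residue_sub_ne_zero (h : Sep n x y) (hs : IsSeparated n v q) (hxy : x.comp ≠ y.comp) :
    residue v q y - residue v q x ≠ 0 := by
  have := h.natAbs_add_two_le hxy
  simpa using hs.zpow_mul_residue_sub_ne_zero (e := 0) hxy (by omega)

theorem diagCoeff_add_symm (h : Sep n x y) (hs : IsSeparated n v q) :
    diagCoeff v q x y + diagCoeff v q y x = q - 1 := by
  unfold diagCoeff
  by_cases hxy : x.comp = y.comp
  · rw [if_pos hxy, if_pos hxy.symm]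
    have hyx := h.symm.qInt_ne_zero hs hxy.symm
    have hneg := qInt_eq_neg_zpow_mul hs.q_ne_zero (y.content - x.content)
    have hxy' := h.qInt_ne_zero hs hxy
    rw [zpow_eq_one_add_mul_qInt, neg_sub] at hneg
    field_simp
    linear_combination hneg
  · rw [if_neg hxy, if_neg (Ne.symm hxy)]
    have := h.residue_sub_ne_zero hs hxy
    have := h.symm.residue_sub_ne_zero hs (Ne.symm hxy)
    field_simp
    ring

end Box.Sep

/-- The relation between the diagonal coefficients of three boxes behind the braid relation. -/
def DiagCocycle (v : Fin m → F) (q : F) (x y z : Box m) : Prop :=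
  diagCoeff v q x y * diagCoeff v q y z =
    diagCoeff v q x z * (diagCoeff v q x y + diagCoeff v q y z - (q - 1))

theorem DiagCocycle.swap_left (hs : IsSeparated n v q) (hxy : Box.Sep n x y)
    (h : DiagCocycle v q y x z) : DiagCocycle v q x y z := by
  have hadd := hxy.diagCoeff_add_symm hs
  unfold DiagCocycle at *
  linear_combination h - (diagCoeff v q x z - diagCoeff v q y z) * hadd

theorem DiagCocycle.swap_right (hs : IsSeparated n v q) (hyz : Box.Sep n y z)
    (h : DiagCocycle v q x z y) : DiagCocycle v q x y z := by
  have hadd := hyz.diagCoeff_add_symm hs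
  unfold DiagCocycle at *
  linear_combination h - (diagCoeff v q x z - diagCoeff v q x y) * hadd

theorem diagCocycle_of_comp_eq_of_comp_eq (hs : IsSeparated n v q) (hxy : Box.Sep n x y)
    (hyz : Box.Sep n y z) (hxz : Box.Sep n x z) (exy : x.comp = y.comp) (eyz : y.comp = z.comp) :
    DiagCocycle v q x y z := by
  have hxy' := hxy.qInt_ne_zero hs exy
  have hyz' := hyz.qInt_ne_zero hs eyz
  have hxz' := hxz.qInt_ne_zero hs (exy.trans eyz)
  have hadd := qInt_add hs.q_ne_zero (y.content - x.content) (z.content - y.content)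
  rw [zpow_eq_one_add_mul_qInt, sub_add_sub_cancel'] at hadd
  rw [DiagCocycle, diagCoeff, diagCoeff, diagCoeff, if_pos exy, if_pos eyz, if_pos (exy.trans eyz)]
  generalize qInt q (y.content - x.content) = d at *
  generalize qInt q (z.content - y.content) = d' at *
  generalize qInt q (z.content - x.content) = d'' at *
  field_simp
  linear_combination hadd

theorem diagCocycle_of_comp_eq_of_comp_ne (hs : IsSeparated n v q) (hxy : Box.Sep n x y)
    (hyz : Box.Sep n y z) (hxz : Box.Sep n x z) (exy : x.comp = y.comp) (eyz : y.comp ≠ z.comp) :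
    DiagCocycle v q x y z := by
  have hxy' := hxy.qInt_ne_zero hs exy
  have hyz' := hyz.residue_sub_ne_zero hs eyz
  have hxz' := hxz.residue_sub_ne_zero hs (exy ▸ eyz)
  rw [residue_eq_mul_of_comp_eq v hs.q_ne_zero exy] at hyz'
  rw [DiagCocycle, diagCoeff, diagCoeff, diagCoeff, if_pos exy, if_neg eyz, if_neg (exy ▸ eyz),
    residue_eq_mul_of_comp_eq v hs.q_ne_zero exy]
  generalize qInt q (y.content - x.content) = d at *
  field_simp
  ring

theorem diagCocycle_of_comp_ne (hs : IsSeparated n v q) (hxy : Box.Sep n x y)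
    (hyz : Box.Sep n y z) (hxz : Box.Sep n x z) (exy : x.comp ≠ y.comp) (eyz : y.comp ≠ z.comp)
    (exz : x.comp ≠ z.comp) : DiagCocycle v q x y z := by
  have hxy' := hxy.residue_sub_ne_zero hs exy
  have hyz' := hyz.residue_sub_ne_zero hs eyz
  have hxz' := hxz.residue_sub_ne_zero hs exz
  rw [DiagCocycle, diagCoeff, diagCoeff, diagCoeff, if_neg exy, if_neg eyz, if_neg exz]
  field_simp
  ring

theorem diagCocycle (hs : IsSeparated n v q) (hxy : Box.Sep n x y) (hyz : Box.Sep n y z)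
    (hxz : Box.Sep n x z) : DiagCocycle v q x y z := by
  by_cases exy : x.comp = y.comp
  · by_cases eyz : y.comp = z.comp
    · exact diagCocycle_of_comp_eq_of_comp_eq hs hxy hyz hxz exy eyz
    · exact diagCocycle_of_comp_eq_of_comp_ne hs hxy hyz hxz exy eyz
  by_cases exz : x.comp = z.comp
  · exact .swap_right hs hyz
      (diagCocycle_of_comp_eq_of_comp_ne hs hxz hyz.symm hxy exz (exz ▸ exy))
  by_cases eyz : y.comp = z.comp
  · exact .swap_left hs hxy (.swap_right hs hxz
      (diagCocycle_of_comp_eq_of_comp_ne hs hyz hxz.symm hxy.symm eyz (Ne.symm exz)))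
  · exact diagCocycle_of_comp_ne hs hxy hyz hxz exy eyz exz

theorem offDiagCoeff_of_covBy (v : Fin m → F) (q : F) (h : x ⋖ y) : offDiagCoeff v q x y = 0 :=
  if_pos h

theorem diagCoeff_eq_or_eq_of_covBy (v : Fin m → F) (hq : q ≠ 0) (h : x ⋖ y) :
    diagCoeff v q x y = q ∨ diagCoeff v q x y = -1 := by
  obtain rfl | rfl := Box.covBy_iff.1 h
  exacts [Or.inl (diagCoeff_right v q x), Or.inr (diagCoeff_below v hq x)]

theorem offDiagCoeff_mul_symm (hs : IsSeparated n v q) (h : Box.Sep n x y) :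
    offDiagCoeff v q x y * offDiagCoeff v q y x =
      (1 + diagCoeff v q x y) * (q - diagCoeff v q x y) := by
  have hadd := h.diagCoeff_add_symm hs
  by_cases hxy : x ⋖ y
  · rw [offDiagCoeff_of_covBy v q hxy]
    obtain h | h := diagCoeff_eq_or_eq_of_covBy v hs.q_ne_zero hxy <;> rw [h] <;> ring
  by_cases hyx : y ⋖ x
  · rw [offDiagCoeff_of_covBy v q hyx, eq_sub_of_add_eq hadd]
    obtain h | h := diagCoeff_eq_or_eq_of_covBy v hs.q_ne_zero hyx <;> rw [h] <;> ring
  · rw [offDiagCoeff, offDiagCoeff, if_neg hxy, if_neg hyx]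
    linear_combination (1 + diagCoeff v q x y) * hadd

theorem one_add_diagCoeff_ne_zero (hs : IsSeparated n v q) (h : Box.Sep n x y)
    (hne : x.comp = y.comp → y.content - x.content ≠ -1) : 1 + diagCoeff v q x y ≠ 0 := by
  unfold diagCoeff
  split_ifs with hxy
  · have hqInt := h.qInt_ne_zero hs hxy
    have hqInt' : qInt q (1 + (y.content - x.content)) ≠ 0 :=
      hs.qInt_ne_zero (by have := hne hxy; omega) (by have := h.natAbs_lt hxy; omega)
    rw [qInt_add hs.q_ne_zero, qInt_one, zpow_one] at hqInt'
    convert div_ne_zero hqInt' hqInt using 1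
    field_simp
    ring
  · have hres := h.residue_sub_ne_zero hs hxy
    have hres' : q ^ (1 : ℤ) * residue v q y - residue v q x ≠ 0 :=
      hs.zpow_mul_residue_sub_ne_zero hxy (by have := h.natAbs_add_two_le hxy; omega)
    rw [zpow_one] at hres'
    convert div_ne_zero hres' hres using 1
    field_simp
    ring

theorem offDiagCoeff_ne_zero (hs : IsSeparated n v q) (h : Box.Sep n x y)
    (hne : x.comp = y.comp → (y.content - x.content).natAbs ≠ 1) : offDiagCoeff v q x y ≠ 0 := by
  have hcov : ¬ x ⋖ y := fun hcov => by
    obtain rfl | rfl := Box.covBy_iff.1 hcov <;>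
      exact hne rfl (by simp [Box.content, Box.right, Box.below])
  rw [offDiagCoeff, if_neg hcov]
  exact one_add_diagCoeff_ne_zero hs h fun hxy heq => hne hxy (by omega)

end Coefficients

/-! ### The seminormal representation -/

section SwapRelations

variable {P : Type*} {i j : ℕ}

theorem swapSeq_braid (i : ℕ) (T : ℕ → P) :
    swapSeq i (swapSeq (i + 1) (swapSeq i T)) =
      swapSeq (i + 1) (swapSeq i (swapSeq (i + 1) T)) := by
  funext j
  simp only [swapSeq, Function.comp_apply, Equiv.swap_apply_def]
  congr 1
  split_ifs <;> omega

theorem swapSeq_comm (h : i + 2 ≤ j) (T : ℕ → P) :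
    swapSeq i (swapSeq j T) = swapSeq j (swapSeq i T) := by
  funext l
  simp only [swapSeq, Function.comp_apply, Equiv.swap_apply_def]
  congr 1
  split_ifs <;> omega

end SwapRelations

section SeqOp

variable {F : Type*} [Field F] {m n : ℕ} {v : Fin m → F} {q : F} {T : ℕ → Box m} {i j : ℕ}

/-- The seminormal operator of `a_{i+1}` on the free module on all sequences of boxes. The relations
of the Hecke algebra hold on the span of the standard sequences only. -/
def seqOp (v : Fin m → F) (q : F) : ℕ → Module.End F ((ℕ → Box m) →₀ F)
  | 0 => Finsupp.linearCombination F fun T => v (T 0).comp • Finsupp.single T 1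
  | i + 1 => Finsupp.linearCombination F fun T =>
      diagCoeff v q (T i) (T (i + 1)) • Finsupp.single T 1 +
        offDiagCoeff v q (T i) (T (i + 1)) • Finsupp.single (swapSeq i T) 1

theorem seqOp_zero_single (v : Fin m → F) (q : F) (T : ℕ → Box m) :
    seqOp v q 0 (Finsupp.single T 1) = v (T 0).comp • Finsupp.single T 1 := by
  rw [seqOp, Finsupp.linearCombination_single, one_smul]

theorem seqOp_succ_single (v : Fin m → F) (q : F) (i : ℕ) (T : ℕ → Box m) :
    seqOp v q (i + 1) (Finsupp.single T 1) =
      diagCoeff v q (T i) (T (i + 1)) • Finsupp.single T 1 +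
        offDiagCoeff v q (T i) (T (i + 1)) • Finsupp.single (swapSeq i T) 1 := by
  rw [seqOp, Finsupp.linearCombination_single, one_smul]

theorem seqOp_quadratic (hs : IsSeparated n v q) (hT : IsStandard n T) (hi : i + 1 < n) :
    seqOp v q (i + 1) (seqOp v q (i + 1) (Finsupp.single T 1)) =
      (q - 1) • seqOp v q (i + 1) (Finsupp.single T 1) + q • Finsupp.single T 1 := by
  have hsep := Box.sep_of_isStandard hT (lt_add_one i) hi (by omega)
  have hadd := hsep.diagCoeff_add_symm hs
  have hmul := offDiagCoeff_mul_symm hs hsep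
  simp only [seqOp_succ_single, map_add, map_smul, swapSeq_left, swapSeq_right, swapSeq_swapSeq]
  match_scalars
  · linear_combination hmul
  · linear_combination offDiagCoeff v q (T i) (T (i + 1)) * hadd

theorem seqOp_braid (hs : IsSeparated n v q) (hT : IsStandard n T) (hi : i + 2 < n) :
    seqOp v q (i + 1) (seqOp v q (i + 2) (seqOp v q (i + 1) (Finsupp.single T 1))) =
      seqOp v q (i + 2) (seqOp v q (i + 1) (seqOp v q (i + 2) (Finsupp.single T 1))) := by
  have hsep₁ := Box.sep_of_isStandard hT (lt_add_one i) (by omega) (by omega)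
  have hsep₂ := Box.sep_of_isStandard hT (lt_add_one (i + 1)) (by omega) (by omega)
  have hcocycle := diagCocycle hs hsep₁ hsep₂
    (Box.sep_of_isStandard hT (by omega) (by omega) (by omega))
  have hadd₁ := hsep₁.diagCoeff_add_symm hs
  have hadd₂ := hsep₂.diagCoeff_add_symm hs
  have hmul₁ := offDiagCoeff_mul_symm hs hsep₁
  have hmul₂ := offDiagCoeff_mul_symm hs hsep₂
  have swapSeq_last (T : ℕ → Box m) : swapSeq i T (i + 1 + 1) = T (i + 1 + 1) :=
    swapSeq_of_ne (by omega) (by omega)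
  have swapSeq_first (T : ℕ → Box m) : swapSeq (i + 1) T i = T i :=
    swapSeq_of_ne (by omega) (by omega)
  rw [DiagCocycle] at hcocycle
  simp only [seqOp_succ_single, map_add, map_smul, swapSeq_left, swapSeq_right, swapSeq_swapSeq,
    swapSeq_last, swapSeq_first, swapSeq_braid]
  generalize diagCoeff v q (T i) (T (i + 1 + 1)) = c at *
  match_scalars
  · linear_combination (diagCoeff v q (T i) (T (i + 1)) -
      diagCoeff v q (T (i + 1)) (T (i + 1 + 1))) * hcocycle + c * hmul₁ - c * hmul₂
  · linear_combination offDiagCoeff v q (T i) (T (i + 1)) * (hcocycle + c * hadd₁)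
  · linear_combination -offDiagCoeff v q (T (i + 1)) (T (i + 1 + 1)) * (hcocycle + c * hadd₂)
  all_goals ring

theorem seqOp_zero_comm (v : Fin m → F) (q : F) (j : ℕ) (T : ℕ → Box m) :
    seqOp v q 0 (seqOp v q (j + 2) (Finsupp.single T 1)) =
      seqOp v q (j + 2) (seqOp v q 0 (Finsupp.single T 1)) := by
  have hzero : swapSeq (j + 1) T 0 = T 0 := swapSeq_of_ne (by omega) (by omega)
  simp only [seqOp_succ_single, seqOp_zero_single, map_add, map_smul, hzero]
  module

theorem seqOp_succ_comm (v : Fin m → F) (q : F) (h : i + 2 ≤ j) (T : ℕ → Box m) :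
    seqOp v q (i + 1) (seqOp v q (j + 1) (Finsupp.single T 1)) =
      seqOp v q (j + 1) (seqOp v q (i + 1) (Finsupp.single T 1)) := by
  simp only [seqOp_succ_single, map_add, map_smul]
  rw [swapSeq_of_ne (i := j) (j := i) (by omega) (by omega),
    swapSeq_of_ne (i := j) (j := i + 1) (by omega) (by omega),
    swapSeq_of_ne (i := i) (j := j) (by omega) (by omega),
    swapSeq_of_ne (i := i) (j := j + 1) (by omega) (by omega), swapSeq_comm h]
  module

namespace Box

theorem zero_eq_of_isStandard (hT : IsStandard n T) (hn : 0 < n) : T 0 = ⟨(T 0).comp, 0, 0⟩ := by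
  by_contra hne
  have hlt : (⟨(T 0).comp, 0, 0⟩ : Box m) < T 0 :=
    lt_of_le_of_ne (le_def.2 ⟨rfl, Nat.zero_le _, Nat.zero_le _⟩) (Ne.symm hne)
  obtain ⟨l, hl, -⟩ := hT.exists_of_lt 0 hn _ hlt
  exact Nat.not_lt_zero l hl

theorem one_eq_of_isStandard (hT : IsStandard n T) (hn : 1 < n) (h : ¬ T 0 < T 1) :
    T 1 = ⟨(T 1).comp, 0, 0⟩ := by
  have hfirst := zero_eq_of_isStandard (hT.swapSeq hn h) (by omega)
  rwa [swapSeq_left] at hfirst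

end Box

theorem residue_mk_zero_zero (v : Fin m → F) (q : F) (c : Fin m) : residue v q ⟨c, 0, 0⟩ = v c := by
  simp [residue, Box.content]

theorem diagCoeff_zero_one_mul_sub (hs : IsSeparated n v q) (hT : IsStandard n T) (hn : 1 < n)
    (h : ¬ T 0 < T 1) :
    diagCoeff v q (T 0) (T 1) * (v (T 1).comp - v (T 0).comp) = (q - 1) * v (T 1).comp := by
  have hzero := Box.zero_eq_of_isStandard hT (by omega)
  have hone := Box.one_eq_of_isStandard hT hn h
  have hne : (T 0).comp ≠ (T 1).comp := fun hcomp =>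
    zero_ne_one (hT.injOn (Set.mem_Iio.2 (by omega)) hn (by rw [hzero, hone, hcomp]))
  have hres := (Box.sep_of_isStandard hT zero_lt_one hn (by omega)).residue_sub_ne_zero hs hne
  rw [diagCoeff, if_neg hne, ← residue_mk_zero_zero v q (T 0).comp,
    ← residue_mk_zero_zero v q (T 1).comp, ← hzero, ← hone]
  field_simp

theorem seqOp_braid_zero (hs : IsSeparated n v q) (hT : IsStandard n T) (hn : 1 < n) :
    seqOp v q 0 (seqOp v q 1 (seqOp v q 0 (seqOp v q 1 (Finsupp.single T 1)))) =
      seqOp v q 1 (seqOp v q 0 (seqOp v q 1 (seqOp v q 0 (Finsupp.single T 1)))) := by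
  have op_one (T : ℕ → Box m) := seqOp_succ_single v q 0 T
  have swapSeq_one (T : ℕ → Box m) : swapSeq 0 T 1 = T 0 := swapSeq_right 0 T
  simp only [zero_add] at op_one
  by_cases hlt : T 0 < T 1
  · have hcov := hT.covBy_of_lt hn hlt
    simp only [op_one, seqOp_zero_single, map_smul, offDiagCoeff_of_covBy v q hcov,
      zero_smul, add_zero]
    module
  · have hadd := (Box.sep_of_isStandard hT zero_lt_one hn (by omega)).diagCoeff_add_symm hs
    have hmul := diagCoeff_zero_one_mul_sub hs hT hn hlt
    simp only [op_one, seqOp_zero_single, map_add, map_smul, swapSeq_left, swapSeq_one,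
      swapSeq_swapSeq, zero_add]
    match_scalars
    · ring
    · linear_combination offDiagCoeff v q (T 0) (T 1) * (v (T 1).comp - v (T 0).comp) *
        (v (T 1).comp * hadd - hmul)

end SeqOp

section TabOp

variable {F : Type*} [Field F] {m n : ℕ} [NeZero m] {v : Fin m → F} {q : F} {i : ℕ}

/-- The seminormal operator of `a_{i+1}` on the free module on the standard tableaux with `n`
boxes. -/
def tabOp (v : Fin m → F) (q : F) (n : ℕ) : ℕ → Module.End F (StdSeq (Box m) n →₀ F)
  | 0 => Finsupp.linearCombination F fun Z => v (Z 0).comp • Finsupp.single Z 1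
  | i + 1 => Finsupp.linearCombination F fun Z =>
      diagCoeff v q (Z i) (Z (i + 1)) • Finsupp.single Z 1 +
        offDiagCoeff v q (Z i) (Z (i + 1)) • Finsupp.single (Z.toggle i) 1

theorem tabOp_zero_single (v : Fin m → F) (q : F) (Z : StdSeq (Box m) n) :
    tabOp v q n 0 (Finsupp.single Z 1) = v (Z 0).comp • Finsupp.single Z 1 := by
  rw [tabOp, Finsupp.linearCombination_single, one_smul]

theorem tabOp_succ_single (v : Fin m → F) (q : F) (i : ℕ) (Z : StdSeq (Box m) n) :
    tabOp v q n (i + 1) (Finsupp.single Z 1) =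
      diagCoeff v q (Z i) (Z (i + 1)) • Finsupp.single Z 1 +
        offDiagCoeff v q (Z i) (Z (i + 1)) • Finsupp.single (Z.toggle i) 1 := by
  rw [tabOp, Finsupp.linearCombination_single, one_smul]

/-- The inclusion of the free module on the standard tableaux into the free module on all sequences
of boxes. -/
def toSeq (F : Type*) [Field F] (m n : ℕ) [NeZero m] :
    (StdSeq (Box m) n →₀ F) →ₗ[F] ((ℕ → Box m) →₀ F) :=
  Finsupp.lmapDomain F F StdSeq.toFun

theorem toSeq_single (Z : StdSeq (Box m) n) :
    toSeq F m n (Finsupp.single Z 1) = Finsupp.single Z.toFun 1 :=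
  Finsupp.mapDomain_single

theorem end_ext_of_toSeq {f g : Module.End F (StdSeq (Box m) n →₀ F)}
    (h : ∀ Z, toSeq F m n (f (Finsupp.single Z 1)) = toSeq F m n (g (Finsupp.single Z 1))) :
    f = g :=
  Finsupp.lhom_ext' fun Z => LinearMap.ext_ring <|
    Finsupp.mapDomain_injective (fun _ _ => StdSeq.ext) (h Z)

theorem toSeq_tabOp (v : Fin m → F) (q : F) (hi : i < n) (z : StdSeq (Box m) n →₀ F) :
    toSeq F m n (tabOp v q n i z) = seqOp v q i (toSeq F m n z) := by
  suffices h : toSeq F m n ∘ₗ tabOp v q n i = seqOp v q i ∘ₗ toSeq F m n from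
    LinearMap.congr_fun h z
  refine Finsupp.lhom_ext' fun Z => LinearMap.ext_ring ?_
  simp only [LinearMap.comp_apply, Finsupp.lsingle_apply, toSeq_single]
  obtain _ | i := i
  · rw [tabOp_zero_single, seqOp_zero_single, map_smul, toSeq_single]
  rw [tabOp_succ_single, seqOp_succ_single, map_add, map_smul, map_smul, toSeq_single,
    toSeq_single]
  by_cases hlt : Z i < Z (i + 1)
  · rw [offDiagCoeff_of_covBy v q (Z.isStandard.covBy_of_lt hi hlt), zero_smul, zero_smul]
  · rw [StdSeq.coe_toggle hi hlt]

end TabOp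

section HeckeRepresentation

open MulOpposite

variable {F : Type} [Field F] {m n : ℕ} {v : Fin m → F} {q : F} {i j : ℕ}

/-- The quotient map from the free algebra to the Hecke algebra. -/
def mkCH (F : Type) [Field F] (m n : ℕ) (v : Fin m → F) (q : F) :
    FreeAlgebra F (Fin n) →ₐ[F] CH F m n v q := RingQuot.mkAlgHom F (Rel F m n v q)

theorem mkCH_surjective : Function.Surjective (mkCH F m n v q) :=
  RingQuot.mkAlgHom_surjective F _

theorem mkCH_eq_of_rel {x y : FreeAlgebra F (Fin n)} (h : Rel F m n v q x y) :
    mkCH F m n v q x = mkCH F m n v q y :=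
  RingQuot.mkAlgHom_rel F h

variable [NeZero m]

theorem tabOp_cyclotomic (v : Fin m → F) (q : F) (n : ℕ) :
    (List.ofFn fun j : Fin m => op (tabOp v q n 0) -
      algebraMap F (Module.End F (StdSeq (Box m) n →₀ F))ᵐᵒᵖ (v j)).prod = 0 := by
  have prod_apply (Z : StdSeq (Box m) n) (l : List F) :
      (l.map fun c => op (tabOp v q n 0) - algebraMap F _ c).prod.unop (Finsupp.single Z 1) =
        (l.map fun c => v (Z 0).comp - c).prod • Finsupp.single Z 1 := by
    induction l with
    | nil => simp
    | cons c l ih =>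
      simp only [List.map_cons, List.prod_cons, unop_mul, Module.End.mul_apply, unop_sub, unop_op,
        LinearMap.sub_apply, MulOpposite.algebraMap_apply, Module.algebraMap_end_apply,
        tabOp_zero_single, ← sub_smul, map_smul]
      simp only [MulOpposite.algebraMap_apply] at ih
      rw [ih, smul_smul]
  refine unop_injective (Finsupp.lhom_ext' fun Z => LinearMap.ext_ring ?_)
  have hvalues : (List.ofFn fun j : Fin m => op (tabOp v q n 0) -
      algebraMap F (Module.End F (StdSeq (Box m) n →₀ F))ᵐᵒᵖ (v j)) =
      (List.ofFn v).map fun c => op (tabOp v q n 0) - algebraMap F _ c := by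
    rw [List.map_ofFn]
    rfl
  have hroot : ((List.ofFn v).map fun c => v (Z 0).comp - c).prod = 0 :=
    List.prod_eq_zero (List.mem_map.2 ⟨v (Z 0).comp, by simp, sub_self _⟩)
  rw [hvalues, LinearMap.comp_apply, Finsupp.lsingle_apply, prod_apply, hroot, zero_smul]
  rfl

theorem tabOp_quadratic (hs : IsSeparated n v q) (hi : i + 1 < n) :
    (tabOp v q n (i + 1) + 1) * (tabOp v q n (i + 1) - algebraMap F _ q) = 0 := by
  refine end_ext_of_toSeq fun Z => ?_
  simp only [Module.End.mul_apply, LinearMap.add_apply, LinearMap.sub_apply, Module.End.one_apply,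
    Module.algebraMap_end_apply, LinearMap.zero_apply, map_add, map_sub, map_smul,
    toSeq_tabOp v q hi, toSeq_single, seqOp_quadratic hs Z.isStandard hi, map_zero]
  module

theorem tabOp_braid (hs : IsSeparated n v q) (hi : i + 2 < n) :
    tabOp v q n (i + 1) * tabOp v q n (i + 2) * tabOp v q n (i + 1) =
      tabOp v q n (i + 2) * tabOp v q n (i + 1) * tabOp v q n (i + 2) := by
  refine end_ext_of_toSeq fun Z => ?_
  simp only [Module.End.mul_apply, toSeq_tabOp v q hi, toSeq_tabOp v q (show i + 1 < n by omega),
    toSeq_single, seqOp_braid hs Z.isStandard hi]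

theorem tabOp_braid_zero (hs : IsSeparated n v q) (hn : 1 < n) :
    tabOp v q n 0 * tabOp v q n 1 * tabOp v q n 0 * tabOp v q n 1 =
      tabOp v q n 1 * tabOp v q n 0 * tabOp v q n 1 * tabOp v q n 0 := by
  refine end_ext_of_toSeq fun Z => ?_
  simp only [Module.End.mul_apply, toSeq_tabOp v q hn, toSeq_tabOp v q (zero_lt_one.trans hn),
    toSeq_single, seqOp_braid_zero hs Z.isStandard hn]

theorem tabOp_comm (v : Fin m → F) (q : F) (hij : i + 2 ≤ j) (hj : j < n) :
    tabOp v q n i * tabOp v q n j = tabOp v q n j * tabOp v q n i := by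
  obtain ⟨j, rfl⟩ := Nat.exists_eq_add_of_le' (Nat.le_of_add_left_le hij)
  refine end_ext_of_toSeq fun Z => ?_
  simp only [Module.End.mul_apply, toSeq_tabOp v q hj, toSeq_tabOp v q (show i < n by omega),
    toSeq_single]
  obtain _ | i := i
  · exact seqOp_zero_comm v q j _
  · exact seqOp_succ_comm v q (by omega) _

theorem lift_tabOp_eq_of_rel (hs : IsSeparated n v q) {x y : FreeAlgebra F (Fin n)}
    (h : Rel F m n v q x y) :
    FreeAlgebra.lift F (fun i : Fin n => op (tabOp v q n i)) x =
      FreeAlgebra.lift F (fun i : Fin n => op (tabOp v q n i)) y := by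
  cases h with
  | cyclo i hi =>
    simp only [map_list_prod, List.map_ofFn, Function.comp_def, map_sub, FreeAlgebra.lift_ι_apply,
      AlgHom.commutes, map_zero, hi]
    exact tabOp_cyclotomic v q n
  | quad i hi =>
    obtain ⟨i', hi'⟩ := Nat.exists_eq_add_of_le' hi
    have hquad := tabOp_quadratic hs (hi' ▸ i.2)
    simp only [map_mul, map_sub, map_add, map_one, AlgHom.commutes, FreeAlgebra.lift_ι_apply,
      map_zero, hi']
    exact congrArg op hquad
  | braid0 i j hi hj =>
    simp only [map_mul, FreeAlgebra.lift_ι_apply, hi, hj, ← op_mul, ← mul_assoc]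
    rw [tabOp_braid_zero hs (hj ▸ j.2)]
  | comm i j hij =>
    simp only [map_mul, FreeAlgebra.lift_ι_apply, ← op_mul, tabOp_comm v q hij j.2]
  | braid i j hi hj =>
    obtain ⟨i', hi'⟩ := Nat.exists_eq_add_of_le' hi
    simp only [map_mul, FreeAlgebra.lift_ι_apply, ← op_mul, ← mul_assoc, hj, hi']
    rw [tabOp_braid hs (by omega)]

/-- The seminormal representation of the Hecke algebra on the free module on the standard tableaux
with `n` boxes. It is a right module, hence a left module over the opposite algebra. -/
def seminormal (hs : IsSeparated n v q) :
    (CH F m n v q)ᵐᵒᵖ →ₐ[F] Module.End F (StdSeq (Box m) n →₀ F) :=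
  AlgHom.opComm (RingQuot.liftAlgHom F ⟨FreeAlgebra.lift F fun i : Fin n => op (tabOp v q n i),
    fun _ _ => lift_tabOp_eq_of_rel hs⟩ : CH F m n v q →ₐ[F] _)

theorem seminormal_mkCH (hs : IsSeparated n v q) (x : FreeAlgebra F (Fin n)) :
    op (seminormal hs (op (mkCH F m n v q x))) =
      FreeAlgebra.lift F (fun i : Fin n => op (tabOp v q n i)) x :=
  RingQuot.liftAlgHom_mkAlgHom_apply F _ _ x

theorem tabOp_mem_range_seminormal (hs : IsSeparated n v q) (hi : i < n) :
    tabOp v q n i ∈ (seminormal hs).range :=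
  ⟨_, op_injective ((seminormal_mkCH hs (FreeAlgebra.ι F ⟨i, hi⟩)).trans
    (FreeAlgebra.lift_ι_apply _ _))⟩

end HeckeRepresentation

/-! ### Matrix units -/

section CoordProj

variable {F X : Type*} [Field F] {s t : Set X} {R : Subalgebra F (Module.End F (X →₀ F))}

/-- The projection onto the span of the basis vectors in `s` along the span of the others. -/
def coordProj (F : Type*) {X : Type*} [Field F] (s : Set X) : Module.End F (X →₀ F) :=
  Finsupp.linearCombination F fun x => if x ∈ s then Finsupp.single x 1 else 0

theorem coordProj_single_of_mem {x : X} (h : x ∈ s) :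
    coordProj F s (Finsupp.single x 1) = Finsupp.single x 1 := by simp [coordProj, h]

theorem coordProj_single_of_notMem {x : X} (h : x ∉ s) :
    coordProj F s (Finsupp.single x 1) = 0 := by simp [coordProj, h]

theorem coordProj_univ : coordProj F (Set.univ : Set X) = 1 :=
  Finsupp.lhom_ext' fun x => LinearMap.ext_ring (coordProj_single_of_mem (Set.mem_univ x))

theorem coordProj_diff (s t : Set X) :
    coordProj F (s \ t) = coordProj F s + (-1 : F) • (coordProj F s * coordProj F t) := by
  refine Finsupp.lhom_ext' fun x => LinearMap.ext_ring ?_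
  by_cases hs : x ∈ s <;> by_cases ht : x ∈ t <;> simp [coordProj, hs, ht]

theorem coordProj_singleton (x : X) :
    coordProj F {x} = Finsupp.lsingle x ∘ₗ Finsupp.lapply x := by
  refine Finsupp.lhom_ext' fun y => LinearMap.ext_ring ?_
  by_cases h : y = x
  · simp [coordProj, h]
  · simp [coordProj, h, Ne.symm h]

theorem coordProj_diff_mem (hs : coordProj F s ∈ R) (ht : coordProj F t ∈ R) :
    coordProj F (s \ t) ∈ R := by
  rw [coordProj_diff]
  exact R.add_mem hs (R.smul_mem (R.mul_mem hs ht) _)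

theorem coordProj_diff_biUnion_mem {ι : Type*} {t : ι → Set X} (hs : coordProj F s ∈ R)
    (I : Finset ι) (ht : ∀ i ∈ I, coordProj F (t i) ∈ R) :
    coordProj F (s \ ⋃ i ∈ I, t i) ∈ R := by
  induction I using Finset.induction_on with
  | empty => simpa using hs
  | insert i I _ ih =>
    rw [Finset.set_biUnion_insert, Set.union_comm, ← Set.sdiff_sdiff]
    exact coordProj_diff_mem (ih fun j hj => ht j (Finset.mem_insert_of_mem hj))
      (ht i (Finset.mem_insert_self i I))

-- Lagrange interpolation at the finitely many eigenvalues of `f` on `s`.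
theorem coordProj_eigenvalue_mem [Finite X] {f : Module.End F (X →₀ F)} (hf : f ∈ R)
    (hs : coordProj F s ∈ R) {g : X → F}
    (hg : ∀ x ∈ s, f (Finsupp.single x 1) = g x • Finsupp.single x 1) (c : F) :
    coordProj F {x ∈ s | g x = c} ∈ R := by
  cases nonempty_fintype X
  let values : Finset F := insert c (Finset.univ.image g)
  let p : Polynomial F := Lagrange.basis values id c
  have eval_p (x : X) : p.eval (g x) = if g x = c then 1 else 0 := by
    split_ifs with h
    · rw [h]
      exact Lagrange.eval_basis_self Function.injective_id.injOn (Finset.mem_insert_self c _)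
    · exact Lagrange.eval_basis_of_ne (v := id) (Ne.symm h) (by simp [values])
  have hp : coordProj F {x ∈ s | g x = c} = Polynomial.aeval f p * coordProj F s := by
    refine Finsupp.lhom_ext' fun x => LinearMap.ext_ring ?_
    simp only [LinearMap.comp_apply, Finsupp.lsingle_apply, Module.End.mul_apply]
    by_cases hx : x ∈ s
    · rw [coordProj_single_of_mem hx, Module.End.aeval_apply_of_hasEigenvector
        ⟨Module.End.mem_eigenspace_iff.2 (hg x hx), by simp⟩, eval_p]
      by_cases hc : g x = c <;> simp [coordProj, hx, hc]
    · simp [coordProj, hx]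
  rw [hp]
  exact R.mul_mem (Algebra.adjoin_le (Set.singleton_subset_iff.2 hf)
    (Polynomial.aeval_mem_adjoin_singleton F f)) hs

end CoordProj

section Separation

variable {F : Type*} [Field F] {m n : ℕ} {v : Fin m → F} {q : F}

theorem IsSeparated.injective (hs : IsSeparated n v q) (hn : 0 < n) : Function.Injective v := by
  intro c c' h
  by_contra hne
  exact hs.zpow_mul_sub_ne_zero 0 hn c c' hne (by simp [h])

theorem diagCoeff_injOn_covBy (hs : IsSeparated n v q) (hn : 1 < n) {x y z : Box m} (hxy : x ⋖ y)
    (hxz : x ⋖ z) (h : diagCoeff v q x y = diagCoeff v q x z) : y = z := by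
  have hq : 1 + q ≠ 0 := by simpa [Finset.sum_range_succ] using hs.geom_sum_ne_zero 1 le_rfl hn
  obtain rfl | rfl := Box.covBy_iff.1 hxy <;> obtain rfl | rfl := Box.covBy_iff.1 hxz
  · rfl
  · rw [diagCoeff_right, diagCoeff_below v hs.q_ne_zero] at h
    exact absurd (by rw [h]; ring) hq
  · rw [diagCoeff_right, diagCoeff_below v hs.q_ne_zero] at h
    exact absurd (by rw [← h]; ring) hq
  · rfl

end Separation

section Cylinder

variable {F : Type*} [Field F] {m n : ℕ} [NeZero m] {v : Fin m → F} {q : F} {i : ℕ}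
  {Z : StdSeq (Box m) n} {R : Subalgebra F (Module.End F (StdSeq (Box m) n →₀ F))}

namespace StdSeq

/-- The standard sequences with the same first `r` entries as `Z`. -/
def cylinder (Z : StdSeq (Box m) n) (r : ℕ) : Set (StdSeq (Box m) n) := {Y | ∀ i < r, Y i = Z i}

theorem cylinder_zero (Z : StdSeq (Box m) n) : Z.cylinder 0 = Set.univ := by simp [cylinder]

theorem cylinder_succ (Z : StdSeq (Box m) n) (r : ℕ) :
    Z.cylinder (r + 1) = {Y ∈ Z.cylinder r | Y r = Z r} := by
  ext Y
  exact Nat.forall_lt_succ_right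

theorem cylinder_self (Z : StdSeq (Box m) n) : Z.cylinder n = {Z} :=
  Set.eq_singleton_iff_unique_mem.2 ⟨fun _ _ => rfl, fun _ => ext_of_lt⟩

theorem toggle_left (hi : i + 1 < n) (h : ¬ Z i < Z (i + 1)) : Z.toggle i i = Z (i + 1) := by
  rw [coe_toggle hi h, swapSeq_left]

theorem toggle_right (hi : i + 1 < n) (h : ¬ Z i < Z (i + 1)) : Z.toggle i (i + 1) = Z i := by
  rw [coe_toggle hi h, swapSeq_right]

theorem not_toggle_lt (hi : i + 1 < n) (h : ¬ Z i < Z (i + 1)) :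
    ¬ Z.toggle i i < Z.toggle i (i + 1) := by
  rw [toggle_left hi h, toggle_right hi h]
  exact fun hlt => Z.isStandard.not_le (lt_add_one i) hi hlt.le

theorem toggle_toggle (hi : i + 1 < n) (h : ¬ Z i < Z (i + 1)) : (Z.toggle i).toggle i = Z :=
  StdSeq.ext (by rw [coe_toggle hi (not_toggle_lt hi h), coe_toggle hi h, swapSeq_swapSeq])

theorem apply_ne_apply_succ (Z : StdSeq (Box m) n) (hi : i + 1 < n) : Z i ≠ Z (i + 1) :=
  fun h => Z.isStandard.not_le (lt_add_one i) hi h.ge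

theorem offDiagCoeff_ne_zero (hs : IsSeparated n v q) (hi : i + 1 < n)
    (h : ¬ Z i < Z (i + 1)) : offDiagCoeff v q (Z i) (Z (i + 1)) ≠ 0 :=
  Cyclo.offDiagCoeff_ne_zero hs (Box.sep_of_isStandard Z.isStandard (lt_add_one i) hi (by omega))
    fun hcomp hone => h (Box.lt_of_natAbs_content_sub_eq_one Z.isStandard hi hcomp hone)

theorem toggle_mem_cylinder_toggle {Y : StdSeq (Box m) n} (hi : i + 1 < n)
    (hZ : ¬ Z i < Z (i + 1)) (hY : ¬ Y i < Y (i + 1)) (h : Y ∈ Z.cylinder i) :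
    Y.toggle i ∈ (Z.toggle i).cylinder (i + 1) ↔ Y (i + 1) = Z (i + 1) := by
  have hbelow : Y.toggle i ∈ (Z.toggle i).cylinder i := fun j hj => by
    rw [coe_toggle hi hZ, coe_toggle hi hY, swapSeq_of_ne (by omega) (by omega),
      swapSeq_of_ne (by omega) (by omega), h j hj]
  rw [cylinder_succ, Set.mem_ofPred_eq, toggle_left hi hZ, toggle_left hi hY]
  exact and_iff_right hbelow

end StdSeq

open StdSeq

theorem tabOp_sandwich_cylinder (v : Fin m → F) (q : F) (hi : i + 1 < n)
    (hlt : ¬ Z i < Z (i + 1)) :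
    coordProj F (Z.cylinder (i + 1)) * tabOp v q n (i + 1) *
        coordProj F ((Z.toggle i).cylinder (i + 1)) * tabOp v q n (i + 1) *
        coordProj F (Z.cylinder (i + 1)) =
      (offDiagCoeff v q (Z i) (Z (i + 1)) * offDiagCoeff v q (Z (i + 1)) (Z i)) •
        coordProj F (Z.cylinder (i + 2)) := by
  refine Finsupp.lhom_ext' fun Y => LinearMap.ext_ring ?_
  simp only [LinearMap.comp_apply, Finsupp.lsingle_apply, Module.End.mul_apply,
    LinearMap.smul_apply]
  by_cases hY : Y ∈ Z.cylinder (i + 1)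
  swap
  · have hY' : Y ∉ Z.cylinder (i + 2) := fun h => hY fun j hj => h j (by omega)
    simp only [coordProj_single_of_notMem hY, coordProj_single_of_notMem hY', map_zero, smul_zero]
  have hYi : Y i = Z i := hY i (by omega)
  have hcyl : Y ∈ Z.cylinder i := fun j hj => hY j (by omega)
  have hYtoggle : Y ∉ (Z.toggle i).cylinder (i + 1) := fun h =>
    Z.apply_ne_apply_succ hi (hYi ▸ toggle_left hi hlt ▸ h i (by omega))
  rw [coordProj_single_of_mem hY, tabOp_succ_single, map_add, map_smul, map_smul,
    coordProj_single_of_notMem hYtoggle, smul_zero, zero_add]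
  by_cases hYsucc : Y (i + 1) = Z (i + 1)
  · have hYlt : ¬ Y i < Y (i + 1) := by rwa [hYi, hYsucc]
    have htoggle := (toggle_mem_cylinder_toggle hi hlt hYlt hcyl).2 hYsucc
    have hnot : Y.toggle i ∉ Z.cylinder (i + 1) := fun h =>
      Y.apply_ne_apply_succ hi (hYi.trans ((h i (by omega)).symm.trans (toggle_left hi hYlt)))
    have hY' : Y ∈ Z.cylinder (i + 2) := by
      rw [cylinder_succ]
      exact ⟨hY, hYsucc⟩
    rw [coordProj_single_of_mem htoggle, map_smul, map_smul, tabOp_succ_single, map_add, map_smul,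
      map_smul, coordProj_single_of_notMem hnot, toggle_toggle hi hYlt, coordProj_single_of_mem hY,
      coordProj_single_of_mem hY', toggle_left hi hYlt, toggle_right hi hYlt, hYi, hYsucc,
      smul_zero, zero_add, smul_smul]
  · have hY' : Y ∉ Z.cylinder (i + 2) := fun h => hYsucc (h (i + 1) (by omega))
    rw [coordProj_single_of_notMem hY', smul_zero]
    by_cases hYlt : Y i < Y (i + 1)
    · simp [offDiagCoeff_of_covBy v q (Y.isStandard.covBy_of_lt hi hYlt)]
    · rw [coordProj_single_of_notMem
        (mt (toggle_mem_cylinder_toggle hi hlt hYlt hcyl).1 hYsucc), smul_zero, map_zero, map_zero]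

theorem coordProj_cylinder_mem_of_not_lt (hs : IsSeparated n v q) (hi : i + 1 < n)
    (hop : tabOp v q n (i + 1) ∈ R)
    (hcyl : ∀ Y : StdSeq (Box m) n, coordProj F (Y.cylinder (i + 1)) ∈ R)
    (hlt : ¬ Z i < Z (i + 1)) : coordProj F (Z.cylinder (i + 2)) ∈ R := by
  have hne : offDiagCoeff v q (Z i) (Z (i + 1)) * offDiagCoeff v q (Z (i + 1)) (Z i) ≠ 0 := by
    have htoggle := (Z.toggle i).offDiagCoeff_ne_zero hs hi (not_toggle_lt hi hlt)
    rw [toggle_left hi hlt, toggle_right hi hlt] at htoggle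
    exact mul_ne_zero (Z.offDiagCoeff_ne_zero hs hi hlt) htoggle
  rw [← inv_smul_smul₀ hne (coordProj F (Z.cylinder (i + 2))),
    ← tabOp_sandwich_cylinder v q hi hlt]
  exact R.smul_mem (R.mul_mem (R.mul_mem (R.mul_mem (R.mul_mem (hcyl Z) hop) (hcyl _)) hop)
    (hcyl Z)) _

theorem coordProj_cylinder_mem_of_lt (hs : IsSeparated n v q) (hi : i + 1 < n)
    (hop : tabOp v q n (i + 1) ∈ R)
    (hcyl : ∀ Y : StdSeq (Box m) n, coordProj F (Y.cylinder (i + 1)) ∈ R)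
    (hlt : Z i < Z (i + 1)) : coordProj F (Z.cylinder (i + 2)) ∈ R := by
  cases nonempty_fintype (StdSeq (Box m) n)
  let blocked : Set (StdSeq (Box m) n) := Z.cylinder (i + 1) \
    ⋃ Y ∈ Finset.univ.filter (fun Y : StdSeq (Box m) n => ¬ Y i < Y (i + 1)), Y.cylinder (i + 2)
  have hblocked : coordProj F blocked ∈ R :=
    coordProj_diff_biUnion_mem (hcyl Z) _ fun Y hY =>
      coordProj_cylinder_mem_of_not_lt hs hi hop hcyl (Finset.mem_filter.1 hY).2
  have covBy_of_mem {Y} (hY : Y ∈ blocked) : Y i ⋖ Y (i + 1) := by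
    refine Y.isStandard.covBy_of_lt hi (by_contra fun hYlt => hY.2 ?_)
    exact Set.mem_biUnion (x := Y) (by simpa using hYlt) fun _ _ => rfl
  have hdiag (Y) (hY : Y ∈ blocked) : tabOp v q n (i + 1) (Finsupp.single Y 1) =
      diagCoeff v q (Y i) (Y (i + 1)) • Finsupp.single Y 1 := by
    rw [tabOp_succ_single, offDiagCoeff_of_covBy v q (covBy_of_mem hY), zero_smul, add_zero]
  convert coordProj_eigenvalue_mem hop hblocked hdiag (diagCoeff v q (Z i) (Z (i + 1))) using 2
  ext Y
  rw [cylinder_succ]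
  constructor
  · rintro ⟨hY, hYsucc⟩
    have hYi : Y i = Z i := hY i (by omega)
    refine ⟨⟨hY, ?_⟩, by rw [hYi, hYsucc]⟩
    simp only [Set.mem_iUnion, Finset.mem_filter, Finset.mem_univ, true_and, not_exists]
    intro U hU hYU
    rw [← hYU i (by omega), ← hYU (i + 1) (by omega), hYi, hYsucc] at hU
    exact hU hlt
  · rintro ⟨hY, hdiagY⟩
    have hYi : Y i = Z i := hY.1 i (by omega)
    have hcov := covBy_of_mem hY
    rw [hYi] at hcov hdiagY
    exact ⟨hY.1, diagCoeff_injOn_covBy hs (by omega) hcov (Z.isStandard.covBy_of_lt hi hlt) hdiagY⟩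

theorem coordProj_cylinder_mem (hs : IsSeparated n v q) (hop : ∀ i < n, tabOp v q n i ∈ R)
    {r : ℕ} (hr : r ≤ n) (Z : StdSeq (Box m) n) : coordProj F (Z.cylinder r) ∈ R := by
  induction r generalizing Z with
  | zero => rw [cylinder_zero, coordProj_univ]; exact R.one_mem
  | succ r ih =>
    obtain _ | i := r
    · have hcyl := coordProj_eigenvalue_mem (hop 0 hr) (ih (by omega) Z)
        (fun Y _ => tabOp_zero_single v q Y) (v (Z 0).comp)
      have heq (Y : StdSeq (Box m) n) : v (Y 0).comp = v (Z 0).comp ↔ Y 0 = Z 0 := by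
        rw [(hs.injective hr).eq_iff, Box.zero_eq_of_isStandard Y.isStandard hr,
          Box.zero_eq_of_isStandard Z.isStandard hr, Box.mk.injEq]
        tauto
      simpa only [cylinder_succ, heq] using hcyl
    · by_cases hlt : Z i < Z (i + 1)
      · exact coordProj_cylinder_mem_of_lt hs hr (hop _ hr) (ih (by omega)) hlt
      · exact coordProj_cylinder_mem_of_not_lt hs hr (hop _ hr) (ih (by omega)) hlt

theorem lsingle_comp_lapply_mem (hs : IsSeparated n v q) (hop : ∀ i < n, tabOp v q n i ∈ R)
    {Z Z' : StdSeq (Box m) n} (h : Z.shape = Z'.shape) :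
    Finsupp.lsingle Z' ∘ₗ Finsupp.lapply Z ∈ R := by
  have diag_mem (Y : StdSeq (Box m) n) : Finsupp.lsingle Y ∘ₗ Finsupp.lapply Y ∈ R := by
    rw [← coordProj_singleton, ← cylinder_self]
    exact coordProj_cylinder_mem hs hop le_rfl Y
  refine toggle_induction (C := fun Y => Finsupp.lsingle Y ∘ₗ Finsupp.lapply Z ∈ R) h (diag_mem Z)
    fun U hU i hi hlt => ?_
  have hne : U.toggle i ≠ U := fun heq =>
    U.apply_ne_apply_succ hi ((congrArg (· i) (congrArg StdSeq.toFun heq)).symm.trans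
      (toggle_left hi hlt))
  have hβ := U.offDiagCoeff_ne_zero hs hi hlt
  have hprod : (Finsupp.lsingle (U.toggle i) ∘ₗ Finsupp.lapply Z :
      Module.End F (StdSeq (Box m) n →₀ F)) =
      (offDiagCoeff v q (U i) (U (i + 1)))⁻¹ •
        ((Finsupp.lsingle (U.toggle i) ∘ₗ Finsupp.lapply (U.toggle i)) * tabOp v q n (i + 1) *
          (Finsupp.lsingle U ∘ₗ Finsupp.lapply Z)) := by
    refine Finsupp.lhom_ext' fun Y => LinearMap.ext_ring ?_
    by_cases hY : Y = Z
    · simp [hY, tabOp_succ_single, hne, hβ]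
    · simp [hY]
  rw [hprod]
  exact R.smul_mem (R.mul_mem (R.mul_mem (diag_mem _) (hop _ hi)) hU) _

end Cylinder

/-! ### The dimension of the Hecke algebra is at most `m ^ n * n!` -/

section DimensionBound

variable {F : Type} [Field F] {m n : ℕ} [NeZero n] {v : Fin m → F} {q : F} {r i j d e : ℕ}

local notation "𝐚" => gen F m n v q
local notation "𝐋" => murphyAux F m n v q

theorem mkCH_ι_natCast (i : ℕ) : mkCH F m n v q (FreeAlgebra.ι F (i : Fin n)) = 𝐚 i := rfl

theorem gen_mul_gen (hi : i + 1 < n) :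
    𝐚 (i + 1) * 𝐚 (i + 1) = (q - 1) • 𝐚 (i + 1) + q • (1 : CH F m n v q) := by
  have hrel := mkCH_eq_of_rel (Rel.quad (v := v) (q := q) ((i + 1 : ℕ) : Fin n)
    (by rw [Fin.val_cast_of_lt hi]; omega))
  rw [map_mul, map_sub, map_add, map_one, map_zero, AlgHom.commutes, mkCH_ι_natCast,
    Algebra.algebraMap_eq_smul_one] at hrel
  rw [← sub_eq_zero, ← hrel]
  simp only [sub_mul, mul_add, smul_mul_assoc, one_mul, mul_one, sub_smul, one_smul]
  abel

theorem gen_braid_zero (hn : 1 < n) : 𝐚 0 * 𝐚 1 * 𝐚 0 * 𝐚 1 = 𝐚 1 * 𝐚 0 * 𝐚 1 * 𝐚 0 := by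
  have hrel := mkCH_eq_of_rel (Rel.braid0 (v := v) (q := q) ((0 : ℕ) : Fin n) ((1 : ℕ) : Fin n)
    (Fin.val_cast_of_lt (zero_lt_one.trans hn)) (Fin.val_cast_of_lt hn))
  simpa only [map_mul, mkCH_ι_natCast] using hrel

theorem gen_braid (hi : i + 2 < n) :
    𝐚 (i + 2) * 𝐚 (i + 1) * 𝐚 (i + 2) = 𝐚 (i + 1) * 𝐚 (i + 2) * 𝐚 (i + 1) := by
  have hrel := mkCH_eq_of_rel (Rel.braid (v := v) (q := q) ((i + 1 : ℕ) : Fin n)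
    ((i + 2 : ℕ) : Fin n) (by rw [Fin.val_cast_of_lt (by omega)]; omega)
    (by rw [Fin.val_cast_of_lt hi, Fin.val_cast_of_lt (by omega)]))
  simpa only [map_mul, mkCH_ι_natCast] using hrel

theorem gen_commute (hij : i + 2 ≤ j) (hj : j < n) : Commute (𝐚 i) (𝐚 j) := by
  have hrel := mkCH_eq_of_rel (Rel.comm (v := v) (q := q) (i : Fin n) (j : Fin n)
    (by rwa [Fin.val_cast_of_lt (by omega), Fin.val_cast_of_lt hj]))
  simp only [map_mul, mkCH_ι_natCast] at hrel
  exact hrel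

theorem gen_zero_pow_mem_span (e : ℕ) :
    𝐚 0 ^ e ∈ Submodule.span F (((Finset.range m).image (𝐚 0 ^ ·) : Finset _) : Set _) := by
  let p : Polynomial F := (List.ofFn fun c : Fin m => Polynomial.X - Polynomial.C (v c)).prod
  have hp : p = ∏ c : Fin m, (Polynomial.X - Polynomial.C (v c)) := List.prod_ofFn
  have hmonic : p.Monic :=
    hp ▸ Polynomial.monic_prod_of_monic _ _ fun c _ => Polynomial.monic_X_sub_C _
  have hdeg : p.natDegree = m := by
    rw [hp, Polynomial.natDegree_prod_of_monic _ _ fun c _ => Polynomial.monic_X_sub_C _]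
    simp
  have hroot : Polynomial.aeval (𝐚 0) p = 0 := by
    have hrel := mkCH_eq_of_rel (Rel.cyclo (v := v) (q := q) ((0 : ℕ) : Fin n)
      (Fin.val_cast_of_lt (NeZero.pos n)))
    rw [map_zero, map_list_prod, List.map_ofFn] at hrel
    rw [← hrel, map_list_prod, List.map_ofFn]
    simp only [Function.comp_def, map_sub, mkCH_ι_natCast, AlgHom.commutes, Polynomial.aeval_X,
      Polynomial.aeval_C]
  have hspan := Submodule.span_range_natDegree_eq_adjoin hmonic hroot
  rw [hdeg] at hspan
  rw [hspan]
  exact Subalgebra.pow_mem _ (Algebra.self_mem_adjoin_singleton F _) e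

theorem adjoin_gen_eq_top : Algebra.adjoin F (𝐚 '' Set.Iio n) = ⊤ := by
  have himage : 𝐚 '' Set.Iio n = mkCH F m n v q '' Set.range (FreeAlgebra.ι F) := by
    rw [← Set.range_comp]
    refine Set.Subset.antisymm ?_ ?_
    · rintro _ ⟨i, -, rfl⟩
      exact ⟨i, mkCH_ι_natCast i⟩
    · rintro _ ⟨i, rfl⟩
      exact ⟨i, i.2, by rw [← mkCH_ι_natCast, Fin.cast_val_eq_self]; rfl⟩
  rw [himage, ← AlgHom.map_adjoin, FreeAlgebra.adjoin_range_ι, Algebra.map_top,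
    AlgHom.range_eq_top]
  exact mkCH_surjective

theorem murphyAux_succ (j : ℕ) : 𝐋 (j + 1) = q⁻¹ • (𝐚 (j + 1) * 𝐋 j * 𝐚 (j + 1)) := rfl

theorem murphyAux_commute_gen_of_lt (hji : j + 2 ≤ i) (hi : i < n) : Commute (𝐋 j) (𝐚 i) := by
  induction j with
  | zero => exact gen_commute hji hi
  | succ j ih =>
    have hcomm : Commute (𝐚 (j + 1)) (𝐚 i) := gen_commute (by omega) hi
    exact ((hcomm.mul_left (ih (by omega))).mul_left hcomm).smul_left _

theorem murphyAux_succ_commute_gen (hj : j + 1 < n) : Commute (𝐋 (j + 1)) (𝐚 j) := by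
  rw [murphyAux_succ]
  refine Commute.smul_left ?_ _
  obtain _ | i := j
  · change 𝐚 1 * 𝐚 0 * 𝐚 1 * 𝐚 0 = 𝐚 0 * (𝐚 1 * 𝐚 0 * 𝐚 1)
    rw [← gen_braid_zero hj]
    simp only [mul_assoc]
  · have hbraid := gen_braid (v := v) (q := q) hj
    have hcomm : 𝐋 i * 𝐚 (i + 2) = 𝐚 (i + 2) * 𝐋 i := murphyAux_commute_gen_of_lt le_rfl hj
    rw [murphyAux_succ, mul_smul_comm, smul_mul_assoc]
    refine Commute.smul_left ?_ _
    calc 𝐚 (i + 2) * (𝐚 (i + 1) * 𝐋 i * 𝐚 (i + 1)) * 𝐚 (i + 2) * 𝐚 (i + 1)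
        = 𝐚 (i + 2) * 𝐚 (i + 1) * 𝐋 i * (𝐚 (i + 1) * 𝐚 (i + 2) * 𝐚 (i + 1)) := by
          simp only [mul_assoc]
      _ = 𝐚 (i + 2) * 𝐚 (i + 1) * (𝐋 i * 𝐚 (i + 2)) * (𝐚 (i + 1) * 𝐚 (i + 2)) := by
          rw [← hbraid]; simp only [mul_assoc]
      _ = (𝐚 (i + 2) * 𝐚 (i + 1) * 𝐚 (i + 2)) * 𝐋 i * (𝐚 (i + 1) * 𝐚 (i + 2)) := by
          rw [hcomm]; simp only [mul_assoc]
      _ = 𝐚 (i + 1) * (𝐚 (i + 2) * (𝐚 (i + 1) * 𝐋 i * 𝐚 (i + 1)) * 𝐚 (i + 2)) := by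
          rw [hbraid]; simp only [mul_assoc]

theorem murphyAux_commute_gen_of_gt (hij : i < j) (hj : j < n) : Commute (𝐋 j) (𝐚 i) := by
  induction j with
  | zero => omega
  | succ j ih =>
    obtain rfl | hij := Nat.lt_succ_iff_lt_or_eq.1 hij |>.symm
    · exact murphyAux_succ_commute_gen hj
    · have hcomm : Commute (𝐚 (j + 1)) (𝐚 i) := (gen_commute (by omega) hj).symm
      exact ((hcomm.mul_left (ih hij (by omega))).mul_left hcomm).smul_left _

theorem murphyAux_commute (hij : i < j) (hj : j < n) : Commute (𝐋 j) (𝐋 i) := by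
  induction i with
  | zero => exact murphyAux_commute_gen_of_gt hij hj
  | succ i ih =>
    have hcomm := murphyAux_commute_gen_of_gt (v := v) (q := q) hij hj
    exact ((hcomm.mul_right (ih (by omega))).mul_right hcomm).smul_right _

theorem murphyAux_mul_gen (hq : q ≠ 0) (hj : j + 1 < n) :
    𝐋 (j + 1) * 𝐚 (j + 1) = (q - 1) • 𝐋 (j + 1) + 𝐚 (j + 1) * 𝐋 j := by
  rw [murphyAux_succ, smul_mul_assoc, mul_assoc (𝐚 (j + 1) * 𝐋 j), gen_mul_gen hj]
  simp only [mul_add, mul_smul_comm, mul_one, smul_add, smul_smul]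
  rw [inv_mul_cancel₀ hq, one_smul, mul_comm q⁻¹]

theorem murphyAux_pow_mul_gen (hq : q ≠ 0) (hj : j + 1 < n) (e : ℕ) :
    𝐋 (j + 1) ^ e * 𝐚 (j + 1) = 𝐚 (j + 1) * 𝐋 j ^ e +
      (q - 1) • ∑ s ∈ Finset.range e, 𝐋 j ^ (e - 1 - s) * 𝐋 (j + 1) ^ (s + 1) := by
  have hcomm : Commute (𝐋 (j + 1)) (𝐋 j) := murphyAux_commute (lt_add_one j) hj
  induction e with
  | zero => simp
  | succ e ih =>
    have hsum : 𝐋 (j + 1) * ∑ s ∈ Finset.range e, 𝐋 j ^ (e - 1 - s) * 𝐋 (j + 1) ^ (s + 1) =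
        ∑ s ∈ Finset.range e, 𝐋 j ^ (e - (s + 1)) * 𝐋 (j + 1) ^ (s + 1 + 1) := by
      rw [Finset.mul_sum]
      refine Finset.sum_congr rfl fun s _ => ?_
      rw [← mul_assoc, (hcomm.pow_right _).eq, mul_assoc, ← pow_succ', Nat.sub_sub, add_comm 1 s]
    rw [pow_succ', mul_assoc, ih, mul_add, ← mul_assoc, murphyAux_mul_gen hq hj, add_mul,
      smul_mul_assoc, mul_smul_comm, hsum, Finset.sum_range_succ', (hcomm.pow_right e).eq,
      pow_succ' (𝐋 j), mul_assoc, smul_add]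
    simp only [Nat.add_sub_cancel, Nat.sub_zero, zero_add, pow_one]
    abel

/-- The descending product `a_{j+d} ⋯ a_{j+1}` (numbering the generators from `0`). -/
def descProd (F : Type) [Field F] (m n : ℕ) [NeZero n] (v : Fin m → F) (q : F) (j : ℕ) :
    ℕ → CH F m n v q
  | 0 => 1
  | d + 1 => gen F m n v q (j + d + 1) * descProd F m n v q j d

local notation "𝐗" => descProd F m n v q

theorem descProd_succ (j d : ℕ) : 𝐗 j (d + 1) = 𝐚 (j + d + 1) * 𝐗 j d := rfl

theorem descProd_succ' (j d : ℕ) : 𝐗 j (d + 1) = 𝐗 (j + 1) d * 𝐚 (j + 1) := by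
  induction d with
  | zero => simp [descProd]
  | succ d ih =>
    rw [descProd_succ, ih, descProd_succ, mul_assoc, add_right_comm j 1 d, add_assoc j d 1]

theorem commute_descProd {x : CH F m n v q} (hx : ∀ i, j + 1 ≤ i → i ≤ j + d → Commute x (𝐚 i)) :
    Commute x (𝐗 j d) := by
  induction d with
  | zero => exact Commute.one_right x
  | succ d ih =>
    exact (hx _ (by omega) (by omega)).mul_right (ih fun i hi _ => hx i hi (by omega))

theorem descProd_mul_gen (hji : j + 1 ≤ i) (hid : i + 1 ≤ j + d) (hn : j + d < n) :
    𝐗 j d * 𝐚 (i + 1) = 𝐚 i * 𝐗 j d := by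
  induction d with
  | zero => omega
  | succ d ih =>
    obtain hid | rfl : i + 1 ≤ j + d ∨ i = j + d := by omega
    · have hcomm := gen_commute (v := v) (q := q) (show i + 2 ≤ j + d + 1 by omega) hn
      rw [descProd_succ, mul_assoc, ih hid (by omega), ← mul_assoc, ← hcomm.eq, mul_assoc]
    · obtain ⟨d, rfl⟩ := Nat.exists_eq_succ_of_ne_zero (show d ≠ 0 by omega)
      have hcomm : Commute (𝐚 (j + d + 2)) (𝐗 j d) :=
        commute_descProd fun i _ hi' => (gen_commute (by omega) (by omega)).symm
      change 𝐚 (j + d + 2) * (𝐚 (j + d + 1) * 𝐗 j d) * 𝐚 (j + d + 2) =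
        𝐚 (j + d + 1) * (𝐚 (j + d + 2) * (𝐚 (j + d + 1) * 𝐗 j d))
      rw [mul_assoc, mul_assoc, ← hcomm.eq, ← mul_assoc, ← mul_assoc, gen_braid (by omega)]
      simp only [mul_assoc]

/-- The elements `a_r ⋯ a_{j+1} L_j ^ e` with `j ≤ r` and `e < m` (numbering from `0`), which span
the subalgebra generated by `a_0, …, a_r` as a left module over the one generated by
`a_0, …, a_{r-1}`. -/
def cosetReps (F : Type) [Field F] (m n : ℕ) [NeZero n] (v : Fin m → F) (q : F) (r : ℕ) :
    Finset (CH F m n v q) :=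
  (Finset.range (r + 1) ×ˢ Finset.range m).image fun p =>
    descProd F m n v q p.1 (r - p.1) * murphyAux F m n v q p.1 ^ p.2

/-- The subalgebra generated by the first `r` generators. -/
def genSubalgebra (F : Type) [Field F] (m n : ℕ) [NeZero n] (v : Fin m → F) (q : F) (r : ℕ) :
    Subalgebra F (CH F m n v q) := Algebra.adjoin F (gen F m n v q '' Set.Iio r)

local notation "𝐀" => genSubalgebra F m n v q

/-- The left `genSubalgebra`-submodule generated by the coset representatives. -/
def repSpan (F : Type) [Field F] (m n : ℕ) [NeZero n] (v : Fin m → F) (q : F) (r : ℕ) :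
    Submodule F (CH F m n v q) :=
  (genSubalgebra F m n v q r).toSubmodule * Submodule.span F (cosetReps F m n v q r)

local notation "𝐍" => repSpan F m n v q

theorem card_cosetReps_le (r : ℕ) : (cosetReps F m n v q r).card ≤ (r + 1) * m :=
  Finset.card_image_le.trans_eq (by simp)

theorem gen_mem_genSubalgebra (hi : i < r) : 𝐚 i ∈ 𝐀 r := Algebra.subset_adjoin ⟨i, hi, rfl⟩

theorem murphyAux_mem_genSubalgebra (hi : i < r) : 𝐋 i ∈ 𝐀 r := by
  induction i with
  | zero => exact gen_mem_genSubalgebra hi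
  | succ i ih =>
    exact Subalgebra.smul_mem _ (mul_mem (mul_mem (gen_mem_genSubalgebra hi) (ih (by omega)))
      (gen_mem_genSubalgebra hi)) _

theorem mul_mem_repSpan {x y : CH F m n v q} (hx : x ∈ 𝐀 r) (hy : y ∈ 𝐍 r) : x * y ∈ 𝐍 r := by
  have hmul := Submodule.mul_mem_mul (show x ∈ (𝐀 r).toSubmodule from hx) hy
  rwa [repSpan, ← mul_assoc, Subalgebra.isIdempotentElem_toSubmodule] at hmul

theorem rep_mem_repSpan (hj : j + d = r) (he : e < m) : 𝐗 j d * 𝐋 j ^ e ∈ 𝐍 r := by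
  have hrep : 𝐗 j d * 𝐋 j ^ e ∈ cosetReps F m n v q r :=
    Finset.mem_image.2 ⟨(j, e), by simp; omega, by simp [← hj]⟩
  have hone : (1 : CH F m n v q) ∈ (𝐀 r).toSubmodule := (𝐀 r).one_mem
  simpa only [one_mul, repSpan] using
    Submodule.mul_mem_mul hone (Submodule.subset_span (R := F) hrep)

theorem descProd_mul_murphyAux_sum_mul_mem_repSpan (hr : r < n) (hj : j + 1 + d = r)
    {b : CH F m n v q} (hb : ∀ s ≤ e, 𝐗 (j + 1) d * 𝐋 (j + 1) ^ s * b ∈ 𝐍 r) :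
    𝐗 (j + 1) d * (∑ s ∈ Finset.range e, 𝐋 j ^ (e - 1 - s) * 𝐋 (j + 1) ^ (s + 1)) * b ∈ 𝐍 r := by
  have hcomm : Commute (𝐋 j) (𝐗 (j + 1) d) :=
    commute_descProd fun i hi hi' => murphyAux_commute_gen_of_lt (by omega) (by omega)
  rw [Finset.mul_sum, Finset.sum_mul]
  refine Submodule.sum_mem _ fun s hs => ?_
  rw [← mul_assoc, ← (hcomm.pow_left _).eq, mul_assoc, mul_assoc, ← mul_assoc (𝐗 (j + 1) d)]
  exact mul_mem_repSpan (Subalgebra.pow_mem _ (murphyAux_mem_genSubalgebra (by omega)) _)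
    (hb _ (Finset.mem_range.1 hs))

theorem rep_mul_gen_self_mem_repSpan (hq : q ≠ 0) (hr : r < n) (hj : j + d = r) (he : e < m) :
    𝐗 j d * 𝐋 j ^ e * 𝐚 j ∈ 𝐍 r := by
  obtain _ | j := j
  · change 𝐗 0 d * 𝐚 0 ^ e * 𝐚 0 ∈ 𝐍 r
    rw [mul_assoc, ← pow_succ]
    have hle : Submodule.span F (((Finset.range m).image (𝐚 0 ^ ·) : Finset _) : Set _) ≤
        (𝐍 r).comap (LinearMap.mulLeft F (𝐗 0 d)) := by
      rw [Submodule.span_le]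
      intro y hy
      obtain ⟨s, hs, rfl⟩ := Finset.mem_image.1 (Finset.mem_coe.1 hy)
      exact rep_mem_repSpan hj (Finset.mem_range.1 hs)
    exact hle (gen_zero_pow_mem_span (e + 1))
  · rw [mul_assoc, murphyAux_pow_mul_gen hq (by omega), mul_add, mul_smul_comm, ← mul_assoc,
      ← descProd_succ']
    refine add_mem (rep_mem_repSpan (by omega) he) (Submodule.smul_mem _ _ ?_)
    simpa only [mul_one] using descProd_mul_murphyAux_sum_mul_mem_repSpan (b := 1) (e := e) hr hj
      fun s hs => by simpa only [mul_one] using rep_mem_repSpan hj (by omega)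

theorem rep_mul_gen_succ_mem_repSpan (hq : q ≠ 0) (hr : r < n) (hj : j + 1 + d = r) (he : e < m) :
    𝐗 j (d + 1) * 𝐋 j ^ e * 𝐚 (j + 1) ∈ 𝐍 r := by
  have hself (s : ℕ) (hs : s ≤ e) : 𝐗 (j + 1) d * 𝐋 (j + 1) ^ s * 𝐚 (j + 1) ∈ 𝐍 r :=
    rep_mul_gen_self_mem_repSpan hq hr hj (by omega)
  have hsum := descProd_mul_murphyAux_sum_mul_mem_repSpan hr hj hself
  have hswap := eq_sub_of_add_eq
    (murphyAux_pow_mul_gen (v := v) hq (show j + 1 < n by omega) e).symm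
  rw [descProd_succ', mul_assoc (𝐗 (j + 1) d), hswap, mul_sub, sub_mul, ← mul_assoc,
    mul_assoc (_ * _), gen_mul_gen (by omega), mul_add, mul_smul_comm, mul_smul_comm, mul_one,
    mul_smul_comm, smul_mul_assoc]
  exact sub_mem (add_mem (Submodule.smul_mem _ _ (hself e le_rfl))
    (Submodule.smul_mem _ _ (rep_mem_repSpan hj he))) (Submodule.smul_mem _ _ hsum)

theorem rep_mul_gen_mem_repSpan (hq : q ≠ 0) (hr : r < n) (hj : j + d = r) (he : e < m)
    (hi : i ≤ r) : 𝐗 j d * 𝐋 j ^ e * 𝐚 i ∈ 𝐍 r := by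
  obtain hij | rfl | rfl | hij : i < j ∨ i = j ∨ i = j + 1 ∨ j + 2 ≤ i := by omega
  · have hcommL := (murphyAux_commute_gen_of_gt (v := v) (q := q) hij
      (show j < n by omega)).pow_left e
    have hcommX : Commute (𝐚 i) (𝐗 j d) :=
      commute_descProd fun l hl hl' => gen_commute (by omega) (by omega)
    rw [mul_assoc, hcommL.eq, ← mul_assoc, ← hcommX.eq, mul_assoc]
    exact mul_mem_repSpan (gen_mem_genSubalgebra (by omega)) (rep_mem_repSpan hj he)
  · exact rep_mul_gen_self_mem_repSpan hq hr hj he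
  · obtain ⟨d, rfl⟩ := Nat.exists_eq_succ_of_ne_zero (show d ≠ 0 by omega)
    exact rep_mul_gen_succ_mem_repSpan hq hr (by omega) he
  · obtain ⟨i, rfl⟩ := Nat.exists_eq_succ_of_ne_zero (show i ≠ 0 by omega)
    have hcommL := (murphyAux_commute_gen_of_lt (v := v) (q := q) hij
      (show i + 1 < n by omega)).pow_left e
    rw [mul_assoc, hcommL.eq, ← mul_assoc, Nat.succ_eq_add_one,
      descProd_mul_gen (by omega) (by omega) (by omega), mul_assoc]
    exact mul_mem_repSpan (gen_mem_genSubalgebra (by omega)) (rep_mem_repSpan hj he)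

theorem mul_gen_mem_repSpan (hq : q ≠ 0) (hr : r < n) (hi : i ≤ r) {y : CH F m n v q}
    (hy : y ∈ 𝐍 r) : y * 𝐚 i ∈ 𝐍 r := by
  have hspan : Submodule.span F (cosetReps F m n v q r : Set _) ≤
      (𝐍 r).comap (LinearMap.mulRight F (𝐚 i)) := by
    rw [Submodule.span_le]
    intro y hy
    obtain ⟨⟨j, e⟩, hje, rfl⟩ := Finset.mem_image.1 (Finset.mem_coe.1 hy)
    obtain ⟨hj, he⟩ := Finset.mem_product.1 hje
    exact rep_mul_gen_mem_repSpan hq hr (by simp at hj ⊢; omega) (Finset.mem_range.1 he) hi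
  refine Submodule.mul_induction_on hy (fun x hx y hy => ?_) fun x y hx hy => ?_
  · rw [mul_assoc]
    exact mul_mem_repSpan hx (hspan hy)
  · rw [add_mul]
    exact add_mem hx hy

variable [NeZero m]

theorem genSubalgebra_succ_le_repSpan (hq : q ≠ 0) (hr : r < n) :
    (𝐀 (r + 1)).toSubmodule ≤ 𝐍 r := by
  have hone : (1 : CH F m n v q) ∈ 𝐍 r := by
    simpa [descProd] using rep_mem_repSpan (F := F) (v := v) (q := q) (add_zero r) (NeZero.pos m)
  have hmul : ∀ x ∈ 𝐀 (r + 1), ∀ y ∈ 𝐍 r, y * x ∈ 𝐍 r := by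
    intro x hx
    induction hx using Algebra.adjoin_induction with
    | mem x hx =>
      obtain ⟨i, hi, rfl⟩ := hx
      exact fun y => mul_gen_mem_repSpan hq hr (Nat.lt_succ_iff.1 hi)
    | algebraMap c =>
      intro y hy
      rw [← Algebra.commutes, ← Algebra.smul_def]
      exact Submodule.smul_mem _ _ hy
    | add x x' _ _ hx hx' => exact fun y hy => (mul_add y x x').symm ▸ add_mem (hx y hy) (hx' y hy)
    | mul x x' _ _ hx hx' => exact fun y hy => mul_assoc y x x' ▸ hx' _ (hx y hy)
  exact fun x hx => one_mul x ▸ hmul x hx 1 hone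

open Pointwise in
theorem exists_finset_genSubalgebra_le_span (hq : q ≠ 0) (hr : r ≤ n) :
    ∃ S : Finset (CH F m n v q), S.card ≤ m ^ r * r.factorial ∧
      (𝐀 r).toSubmodule ≤ Submodule.span F S := by
  induction r with
  | zero =>
    refine ⟨{1}, by simp, ?_⟩
    simp [genSubalgebra, Algebra.toSubmodule_bot, Submodule.one_eq_span]
  | succ r ih =>
    obtain ⟨S, hcard, hS⟩ := ih (Nat.le_of_succ_le hr)
    refine ⟨S * cosetReps F m n v q r, ?_, ?_⟩
    · calc (S * cosetReps F m n v q r).card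
          ≤ (m ^ r * r.factorial) * ((r + 1) * m) :=
            Finset.card_mul_le.trans (Nat.mul_le_mul hcard (card_cosetReps_le r))
        _ = m ^ (r + 1) * (r + 1).factorial := by rw [Nat.factorial_succ]; ring
    · rw [Finset.coe_mul, ← Submodule.span_mul_span]
      exact (genSubalgebra_succ_le_repSpan hq hr).trans (mul_le_mul_left hS _)

theorem exists_finset_span_eq_top (hq : q ≠ 0) :
    ∃ S : Finset (CH F m n v q), S.card ≤ m ^ n * n.factorial ∧
      Submodule.span F (S : Set (CH F m n v q)) = ⊤ := by
  obtain ⟨S, hcard, hS⟩ := exists_finset_genSubalgebra_le_span (v := v) hq (le_refl n)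
  refine ⟨S, hcard, top_le_iff.1 (le_trans (Eq.ge ?_) hS)⟩
  rw [genSubalgebra, adjoin_gen_eq_top, Algebra.top_toSubmodule]

theorem finite_CH (hq : q ≠ 0) : Module.Finite F (CH F m n v q) :=
  let ⟨S, _, hS⟩ := exists_finset_span_eq_top hq
  ⟨S, hS⟩

theorem finrank_CH_le (hq : q ≠ 0) : Module.finrank F (CH F m n v q) ≤ m ^ n * n.factorial := by
  obtain ⟨S, hcard, hS⟩ := exists_finset_span_eq_top (n := n) (v := v) hq
  have hrank := finrank_span_finset_le_card (R := F) S
  rw [Set.finrank, hS, finrank_top] at hrank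
  exact hrank.trans hcard

end DimensionBound

/-! ### Simple modules of an algebra of block diagonal matrices -/

section BlockDiagonal

universe u

variable {F A X I : Type*} [Field F] [Ring A] [Algebra F A]
  {ρ : A →ₐ[F] Module.End F (X →₀ F)} {sh : X → I}

/-- The span of the basis vectors in the fibre of `sh` over `i`. -/
def fibreSpan (F : Type*) [Field F] (sh : X → I) (i : I) : Submodule F (X →₀ F) :=
  Finsupp.supported F F (sh ⁻¹' {i})

/-- The representation `ρ` identifies `A` with the algebra of the matrices that are block diagonal
with respect to the fibres of `sh`. -/
structure IsBlockDiagonal (ρ : A →ₐ[F] Module.End F (X →₀ F)) (sh : X → I) : Prop where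
  injective : Function.Injective ρ
  mem_invtSubmodule : ∀ a i, fibreSpan F sh i ∈ (ρ a).invtSubmodule
  lsingle_comp_lapply_mem : ∀ x y, sh x = sh y →
    (Finsupp.lsingle y ∘ₗ Finsupp.lapply x : Module.End F (X →₀ F)) ∈ ρ.range

theorem single_mem_fibreSpan (x : X) : Finsupp.single x (1 : F) ∈ fibreSpan F sh (sh x) :=
  Finsupp.single_mem_supported F _ rfl

theorem finrank_fibreSpan (i : I) :
    Module.finrank F (fibreSpan F sh i) = Nat.card {x // sh x = i} := by
  rw [fibreSpan, (Finsupp.supportedEquivFinsupp _).finrank_eq]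
  exact Module.finrank_eq_nat_card_basis Finsupp.basisSingleOne

theorem injective_of_finrank_le_card {M N ι : Type*} [AddCommGroup M] [Module F M]
    [Module.Finite F M] [AddCommGroup N] [Module F N] [Finite ι] (f : M →ₗ[F] N) {b : ι → N}
    (hb : LinearIndependent F b) (hmem : ∀ l, b l ∈ LinearMap.range f)
    (hdim : Module.finrank F M ≤ Nat.card ι) : Function.Injective f := by
  have := Fintype.ofFinite ι
  have hspan : Submodule.span F (Set.range b) ≤ LinearMap.range f :=
    Submodule.span_le.2 (Set.range_subset_iff.2 hmem)
  have hcard := Submodule.finrank_mono hspan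
  rw [finrank_span_eq_card hb, ← Nat.card_eq_fintype_card] at hcard
  have hrank := f.finrank_range_add_finrank_ker
  exact LinearMap.ker_eq_bot.1 (Submodule.finrank_eq_zero.1 (by omega))

/-- The matrix coefficients of an endomorphism: the value at `(x, y)` is the coordinate at `y` of
the image of the basis vector `x`. -/
def matrixCoeffs : Module.End F (X →₀ F) →ₗ[F] X × X → F :=
  LinearMap.pi fun p => Finsupp.lapply p.2 ∘ₗ LinearMap.applyₗ (Finsupp.single p.1 1)

theorem matrixCoeffs_lsingle_comp_lapply (p : X × X) :
    matrixCoeffs (Finsupp.lsingle p.2 ∘ₗ Finsupp.lapply p.1 : Module.End F (X →₀ F)) =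
      Pi.single p 1 := by
  ext p'
  simp only [matrixCoeffs, LinearMap.pi_apply, LinearMap.comp_apply,
    LinearMap.applyₗ_apply_apply, Finsupp.lapply_apply, Finsupp.lsingle_apply,
    Finsupp.single_apply, Pi.single_apply, Prod.ext_iff]
  grind

theorem injective_of_finrank_le [Finite X] [Module.Finite F A]
    (hmem : ∀ x y, sh x = sh y →
      (Finsupp.lsingle y ∘ₗ Finsupp.lapply x : Module.End F (X →₀ F)) ∈ ρ.range)
    (hdim : Module.finrank F A ≤ Nat.card {p : X × X // sh p.1 = sh p.2}) :
    Function.Injective ρ := by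
  refine Function.Injective.of_comp (f := matrixCoeffs) (injective_of_finrank_le_card
    (matrixCoeffs ∘ₗ ρ.toLinearMap) ((Pi.linearIndependent_single_one (X × X) F).comp
      (Subtype.val : {p : X × X // sh p.1 = sh p.2} → X × X) Subtype.val_injective) ?_ hdim)
  rintro ⟨p, hp⟩
  obtain ⟨a, ha⟩ := hmem _ _ hp
  exact ⟨a, (congrArg matrixCoeffs ha).trans (matrixCoeffs_lsingle_comp_lapply p)⟩

/-- The space of the representation `ρ`, as a module over `A`. -/
def RepModule (_ : A →ₐ[F] Module.End F (X →₀ F)) : Type _ := X →₀ F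

namespace RepModule

instance : AddCommGroup (RepModule ρ) := inferInstanceAs (AddCommGroup (X →₀ F))

instance : Module F (RepModule ρ) := inferInstanceAs (Module F (X →₀ F))

instance : Module A (RepModule ρ) := Module.compHom (X →₀ F) ρ.toRingHom

theorem smul_def (a : A) (z : RepModule ρ) : a • z = ρ a z := rfl

instance : IsScalarTower F A (RepModule ρ) :=
  ⟨fun c a z => by simp only [smul_def, map_smul]; rfl⟩

/-- The coordinate of a vector at the basis vector `x`. -/
def coord (x : X) : RepModule ρ →ₗ[F] F := (Finsupp.lapply x : (X →₀ F) →ₗ[F] F)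

theorem sum_coord_smul_single [Fintype X] (z : RepModule ρ) :
    ∑ x, coord x z • (Finsupp.single x (1 : F) : RepModule ρ) = z :=
  Finsupp.basisSingleOne.sum_repr (R := F) (M := X →₀ F) z

end RepModule

namespace IsBlockDiagonal

theorem eq_of_smul_eq (hρ : IsBlockDiagonal ρ sh) {a b : A}
    (h : ∀ z : RepModule ρ, a • z = b • z) : a = b :=
  hρ.injective (LinearMap.ext h)

theorem smulRight_lapply_mem_range (hρ : IsBlockDiagonal ρ sh) {x : X} {w : X →₀ F}
    (hw : w ∈ fibreSpan F sh (sh x)) :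
    (Finsupp.lapply x : (X →₀ F) →ₗ[F] F).smulRight w ∈ ρ.range := by
  let rankOne : (X →₀ F) →ₗ[F] Module.End F (X →₀ F) := LinearMap.smulRightₗ (Finsupp.lapply x)
  suffices fibreSpan F sh (sh x) ≤ ρ.range.toSubmodule.comap rankOne from this hw
  rw [fibreSpan, Finsupp.supported_eq_span_single, Submodule.span_le]
  rintro _ ⟨y, hy, rfl⟩
  have hunit : rankOne (Finsupp.single y 1) = Finsupp.lsingle y ∘ₗ Finsupp.lapply x := by
    ext
    simp [rankOne, Finsupp.single_apply]
  exact (congrArg (· ∈ ρ.range) hunit).mpr (hρ.lsingle_comp_lapply_mem x y (Eq.symm hy))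

variable (hρ : IsBlockDiagonal ρ sh) {i j : I} {x : X}

/-- The `A`-module of the vectors supported on the fibre of `sh` over `i`. -/
def block (i : I) : Submodule A (RepModule ρ) where
  __ := (fibreSpan F sh i).toAddSubmonoid
  smul_mem' a _ hz := hρ.mem_invtSubmodule a i hz

/-- The basis vector `x`, as an element of its block. -/
def blockSingle (x : X) : hρ.block (sh x) := ⟨Finsupp.single x (1 : F), single_mem_fibreSpan x⟩

theorem blockSingle_ne_zero (x : X) : hρ.blockSingle x ≠ 0 := fun h =>
  one_ne_zero (Finsupp.single_eq_zero.1 (congrArg Subtype.val h))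

theorem coord_blockSingle (x : X) : RepModule.coord x (hρ.blockSingle x).1 = 1 :=
  Finsupp.single_eq_same

theorem coord_eq_zero (hx : sh x ≠ i) (z : hρ.block i) : RepModule.coord x z.1 = 0 :=
  Finsupp.notMem_support_iff.1 fun hmem => hx ((Finsupp.mem_supported F z.1).1 z.2 hmem)

theorem finrank_block (i : I) : Module.finrank F (hρ.block i) = Nat.card {x // sh x = i} :=
  finrank_fibreSpan i

theorem exists_forall_smul_eq (w : hρ.block (sh x)) :
    ∃ a : A, ∀ z : RepModule ρ, a • z = RepModule.coord x z • w.1 :=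
  (hρ.smulRight_lapply_mem_range w.2).imp fun _ ha => LinearMap.congr_fun ha

/-- The linear map taking a vector `w` of the block of `x` to the element of `A` that maps the basis
vector `x` to `w` and kills the other basis vectors. -/
def rankOne (x : X) : hρ.block (sh x) →ₗ[A] A where
  toFun w := (hρ.exists_forall_smul_eq w).choose
  map_add' w w' := hρ.eq_of_smul_eq fun z => by
    rw [add_smul, (hρ.exists_forall_smul_eq w).choose_spec,
      (hρ.exists_forall_smul_eq w').choose_spec, (hρ.exists_forall_smul_eq (w + w')).choose_spec]
    exact smul_add _ _ _
  map_smul' a w := hρ.eq_of_smul_eq fun z => by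
    rw [RingHom.id_apply, smul_eq_mul, mul_smul, (hρ.exists_forall_smul_eq w).choose_spec,
      (hρ.exists_forall_smul_eq (a • w)).choose_spec]
    exact ((ρ a).map_smul _ _).symm

theorem rankOne_smul (x : X) (w : hρ.block (sh x)) (z : RepModule ρ) :
    hρ.rankOne x w • z = RepModule.coord x z • w.1 :=
  (hρ.exists_forall_smul_eq w).choose_spec z

theorem rankOne_smul_blockSingle (x : X) (w : hρ.block (sh x)) :
    hρ.rankOne x w • hρ.blockSingle x = w :=
  Subtype.ext ((hρ.rankOne_smul x w _).trans
    (by rw [coord_blockSingle, one_smul]))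

theorem rankOne_smul_eq_zero (x : X) (w : hρ.block (sh x)) (hj : sh x ≠ j) (z : hρ.block j) :
    hρ.rankOne x w • z = 0 :=
  Subtype.ext ((hρ.rankOne_smul x w _).trans
    (by rw [hρ.coord_eq_zero hj, zero_smul, Submodule.coe_zero]))

theorem sum_rankOne_blockSingle [Fintype X] : ∑ x, hρ.rankOne x (hρ.blockSingle x) = 1 := by
  refine hρ.eq_of_smul_eq fun z => ?_
  simp only [Finset.sum_smul, rankOne_smul, one_smul]
  exact RepModule.sum_coord_smul_single z

theorem isSimpleModule_block (hi : i ∈ Set.range sh) : IsSimpleModule A (hρ.block i) := by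
  refine isSimpleModule_iff_toSpanSingleton_surjective.2 ⟨?_, fun z hz w => ?_⟩
  · obtain ⟨x, rfl⟩ := hi
    exact ⟨_, _, hρ.blockSingle_ne_zero x⟩
  · obtain ⟨y, hy⟩ : ∃ y, RepModule.coord y z.1 ≠ 0 :=
      Finsupp.ne_iff.1 fun h => hz (Subtype.ext h)
    obtain rfl : sh y = i := by
      by_contra hyi
      exact hy (hρ.coord_eq_zero hyi z)
    refine ⟨hρ.rankOne y ((RepModule.coord y z.1)⁻¹ • w), Subtype.ext ?_⟩
    exact (hρ.rankOne_smul y _ _).trans (smul_inv_smul₀ hy w.1)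

theorem eq_of_linearEquiv_block (hi : i ∈ Set.range sh) (e : hρ.block i ≃ₗ[A] hρ.block j) :
    i = j := by
  obtain ⟨x, rfl⟩ := hi
  by_contra hne
  refine hρ.blockSingle_ne_zero x (e.map_eq_zero_iff.1 ?_)
  rw [← hρ.rankOne_smul_blockSingle x (hρ.blockSingle x), map_smul, hρ.rankOne_smul_eq_zero _ _ hne]

theorem exists_linearEquiv_block [Finite X] (W : Type*) [AddCommGroup W] [Module A W]
    [IsSimpleModule A W] : ∃ x, Nonempty (W ≃ₗ[A] hρ.block (sh x)) := by
  have := Fintype.ofFinite X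
  have := IsSimpleModule.nontrivial A W
  obtain ⟨w, hw⟩ := exists_ne (0 : W)
  obtain ⟨x, hx⟩ : ∃ x, hρ.rankOne x (hρ.blockSingle x) • w ≠ 0 := by
    by_contra! hzero
    refine hw ?_
    rw [← one_smul A w, ← hρ.sum_rankOne_blockSingle, Finset.sum_smul,
      Finset.sum_eq_zero fun x _ => hzero x]
  have := hρ.isSimpleModule_block ⟨x, rfl⟩
  let f : hρ.block (sh x) →ₗ[A] W := LinearMap.toSpanSingleton A W w ∘ₗ hρ.rankOne x
  have hf : f ≠ 0 := fun h => hx (LinearMap.congr_fun h (hρ.blockSingle x))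
  exact ⟨x, ⟨(LinearEquiv.ofBijective f (LinearMap.bijective_of_ne_zero hf)).symm⟩⟩

theorem finrank_restrictScalars_ulift_block (i : I) :
    Module.finrank F (RestrictScalars F A (ULift.{u} (hρ.block i))) =
      Nat.card {x // sh x = i} := by
  rw [← hρ.finrank_block i]
  let e : RestrictScalars F A (ULift.{u} (hρ.block i)) ≃+ hρ.block i :=
    (RestrictScalars.addEquiv F A _).trans AddEquiv.ulift
  refine LinearEquiv.finrank_eq { e with map_smul' := fun c z => ?_ }
  exact algebraMap_smul A c (e z)

end IsBlockDiagonal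

end BlockDiagonal

section SeminormalBlocks

open MulOpposite

variable {F : Type} [Field F] {m n : ℕ} [NeZero m] {v : Fin m → F} {q : F}

theorem fibreSpan_shape_mem_invtSubmodule_tabOp (v : Fin m → F) (q : F) (i : ℕ)
    (D : Finset (Box m)) :
    fibreSpan F (StdSeq.shape (n := n)) D ∈ (tabOp v q n i).invtSubmodule := by
  rw [Module.End.mem_invtSubmodule]
  conv_lhs => rw [fibreSpan, Finsupp.supported_eq_span_single]
  rw [Submodule.span_le]
  rintro _ ⟨Z, rfl, rfl⟩
  simp only [SetLike.mem_coe, Submodule.mem_comap]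
  obtain _ | i := i
  · exact (tabOp_zero_single v q Z).symm ▸ Submodule.smul_mem _ _ (single_mem_fibreSpan Z)
  · exact (tabOp_succ_single v q i Z).symm ▸ Submodule.add_mem _
      (Submodule.smul_mem _ _ (single_mem_fibreSpan Z))
      (Submodule.smul_mem _ _ (Z.shape_toggle i ▸ single_mem_fibreSpan (Z.toggle i)))

theorem fibreSpan_shape_mem_invtSubmodule_seminormal (hs : IsSeparated n v q)
    (a : (CH F m n v q)ᵐᵒᵖ) (D : Finset (Box m)) :
    fibreSpan F (StdSeq.shape (n := n)) D ∈ (seminormal hs a).invtSubmodule := by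
  obtain ⟨x, hx⟩ := mkCH_surjective a.unop
  suffices ∀ z ∈ fibreSpan F StdSeq.shape D,
      (FreeAlgebra.lift F (fun i : Fin n => op (tabOp v q n i)) x).unop z ∈
        fibreSpan F (StdSeq.shape (n := n)) D by
    rwa [← seminormal_mkCH hs, unop_op, hx, op_unop] at this
  clear hx
  induction x using FreeAlgebra.induction with
  | grade0 c => exact fun z hz => by simpa using Submodule.smul_mem _ c hz
  | grade1 i =>
    rw [FreeAlgebra.lift_ι_apply, unop_op]
    exact fibreSpan_shape_mem_invtSubmodule_tabOp v q i D
  | mul x y hx hy =>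
    rw [map_mul, unop_mul]
    exact fun z hz => hy _ (hx z hz)
  | add x y hx hy =>
    rw [map_add, unop_add]
    exact fun z hz => Submodule.add_mem _ (hx z hz) (hy z hz)

theorem card_shape_eq_shape (m n : ℕ) [NeZero m] :
    Nat.card {p : StdSeq (Box m) n × StdSeq (Box m) n // p.1.shape = p.2.shape} =
      m ^ n * n.factorial := by
  have (n : ℕ) := Fintype.ofFinite (StdSeq (Box m) n)
  rw [← StdSeq.sum_numShape_shape Box.isDifferential n,
    Nat.card_congr (Equiv.subtypeProdEquivSigmaSubtype
      fun Z Y : StdSeq (Box m) n => Z.shape = Y.shape), Nat.card_sigma]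
  exact Finset.sum_congr rfl fun Z _ => Nat.card_congr (Equiv.subtypeEquivRight fun _ => eq_comm)

theorem isBlockDiagonal_seminormal [NeZero n] (hs : IsSeparated n v q) :
    IsBlockDiagonal (seminormal hs) (StdSeq.shape (n := n)) where
  injective := by
    have := finite_CH (m := m) (n := n) (v := v) hs.q_ne_zero
    have : Module.Finite F (CH F m n v q)ᵐᵒᵖ := Module.Finite.equiv (opLinearEquiv F)
    refine injective_of_finrank_le
      (fun _ _ => lsingle_comp_lapply_mem hs fun _ => tabOp_mem_range_seminormal hs) ?_
    rw [card_shape_eq_shape, ← (opLinearEquiv F : CH F m n v q ≃ₗ[F] _).finrank_eq]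
    exact finrank_CH_le hs.q_ne_zero
  mem_invtSubmodule := fibreSpan_shape_mem_invtSubmodule_seminormal hs
  lsingle_comp_lapply_mem _ _ := lsingle_comp_lapply_mem hs fun _ => tabOp_mem_range_seminormal hs

end SeminormalBlocks

/-! ### Multipartitions and standard tableaux -/

section Multipartitions

variable {m n a : ℕ} {x y : Box m} {D : Finset (Box m)} {Λ : Multipartition m n}

theorem Box.row_lt_card (hD : IsLowerSet (D : Set (Box m))) (hx : x ∈ D) : x.row < D.card := by
  have hsub : (Finset.range (x.row + 1)).image (fun a => (⟨x.comp, a, 0⟩ : Box m)) ⊆ D := by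
    intro y hy
    obtain ⟨a, ha, rfl⟩ := Finset.mem_image.1 hy
    exact hD (show _ ≤ x from ⟨rfl, Nat.lt_succ_iff.1 (Finset.mem_range.1 ha), x.col.zero_le⟩) hx
  have hinj : Function.Injective fun a => (⟨x.comp, a, 0⟩ : Box m) := fun a a' h =>
    congrArg Box.row h
  simpa [Finset.card_image_of_injective _ hinj] using Finset.card_le_card hsub

theorem Box.rowLength_eq_zero (hD : IsLowerSet (D : Set (Box m))) (c : Fin m) (ha : D.card ≤ a) :
    Box.rowLength D c a = 0 := by
  refine Nat.eq_zero_of_not_pos fun hpos => ?_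
  exact (Box.row_lt_card hD ((Box.mem_iff_lt_rowLength hD).2 hpos)).not_ge ha

theorem Box.sum_rowLength (hD : IsLowerSet (D : Set (Box m))) :
    ∑ c, ∑ a ∈ Finset.range D.card, Box.rowLength D c a = D.card := by
  rw [← Finset.sum_product' Finset.univ, eq_comm]
  convert Finset.card_eq_sum_card_fiberwise (f := fun x : Box m => (x.comp, x.row)) (s := D)
    (t := Finset.univ ×ˢ Finset.range D.card)
    (fun x hx => by simpa using Box.row_lt_card hD hx) using 3
  simp [Prod.ext_iff, Box.rowLength]

namespace Multipartition

/-- The boxes of the Young diagrams of a multipartition. -/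
def diagram (Λ : Multipartition m n) : Finset (Box m) :=
  ((Finset.univ ×ˢ Finset.range n).sigma fun p => Finset.range (Λ.part p.1 p.2)).map
    ⟨fun s => ⟨s.1.1, s.1.2, s.2⟩, by rintro ⟨⟨_, _⟩, _⟩ ⟨⟨_, _⟩, _⟩ ⟨⟩; rfl⟩

theorem mem_diagram : x ∈ Λ.diagram ↔ x.col < Λ.part x.comp x.row := by
  simp only [diagram, Finset.mem_map, Finset.mem_sigma, Finset.mem_product, Finset.mem_univ,
    true_and, Finset.mem_range]
  refine ⟨?_, fun hx => ⟨⟨(x.comp, x.row), x.col⟩, ⟨?_, hx⟩, rfl⟩⟩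
  · rintro ⟨s, ⟨-, hs⟩, rfl⟩
    exact hs
  · exact not_le.1 fun hle => (hx.trans_eq (Λ.bound _ _ hle)).not_ge (Nat.zero_le _)

theorem isLowerSet_diagram (Λ : Multipartition m n) : IsLowerSet (Λ.diagram : Set (Box m)) := by
  rintro y x ⟨hcomp, hrow, hcol⟩ hy
  rw [Finset.mem_coe, mem_diagram] at hy ⊢
  rw [hcomp]
  exact hcol.trans_lt (hy.trans_le (antitone_nat_of_succ_le (Λ.mono y.comp) hrow))

theorem card_diagram (Λ : Multipartition m n) : Λ.diagram.card = n := by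
  rw [diagram, Finset.card_map, Finset.card_sigma, Finset.sum_product]
  simpa using Λ.total

theorem diagram_injective : Function.Injective (diagram : Multipartition m n → _) := by
  intro Λ Λ' h
  have hpart : Λ.part = Λ'.part := by
    ext c a
    refine eq_of_forall_lt_iff fun b => ?_
    simpa only [mem_diagram] using Finset.ext_iff.1 h ⟨c, a, b⟩
  cases Λ
  cases Λ'
  cases hpart
  rfl

theorem exists_diagram_eq (hD : IsLowerSet (D : Set (Box m))) (hcard : D.card = n) :
    ∃ Λ : Multipartition m n, Λ.diagram = D := by
  subst hcard
  refine ⟨⟨Box.rowLength D, fun c i => Box.rowLength_antitone hD c i.le_succ,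
    fun c _ => Box.rowLength_eq_zero hD c, Box.sum_rowLength hD⟩, ?_⟩
  ext x
  rw [mem_diagram, ← Box.mem_iff_lt_rowLength hD]

end Multipartition

namespace StdTableau

/-- The entry of a standard tableau in the box `x`. -/
def entryAt (T : StdTableau Λ) (x : Box m) : ℕ := T.entry x.comp x.row x.col

theorem eq_of_entryAt_eq {T T' : StdTableau Λ} (h : ∀ x ∈ Λ.diagram, T.entryAt x = T'.entryAt x) :
    T = T' := by
  have hentry : T.entry = T'.entry := by
    ext c i j
    by_cases hmem : j < Λ.part c i
    · exact h ⟨c, i, j⟩ (Multipartition.mem_diagram.2 hmem)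
    · rw [T.outside c i j hmem, T'.outside c i j hmem]
  cases T
  cases T'
  cases hentry
  rfl

theorem entryAt_lt_entryAt (T : StdTableau Λ) (hy : y ∈ Λ.diagram) (hxy : x < y) :
    T.entryAt x < T.entryAt y := by
  induction hd : (y.row - x.row) + (y.col - x.col) using Nat.strong_induction_on generalizing x with
  | h d ih =>
  have hstep {z : Box m} (hxz : x < z) (hzy : z ≤ y) (hT : T.entryAt x < T.entryAt z) :
      T.entryAt x < T.entryAt y := by
    obtain rfl | hzy := hzy.eq_or_lt
    · exact hT
    · refine hT.trans (ih _ ?_ hzy rfl)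
      have := Box.lt_def.1 hxz
      have := Box.lt_def.1 hzy
      omega
  obtain hle | hle := Box.right_le_or_below_le hxy
  · exact hstep x.lt_right hle
      (T.row _ _ _ (Multipartition.mem_diagram.1 (Λ.isLowerSet_diagram hle hy)))
  · exact hstep x.lt_below hle
      (T.col _ _ _ (Multipartition.mem_diagram.1 (Λ.isLowerSet_diagram hle hy)))

theorem entryAt_injOn (T : StdTableau Λ) : Set.InjOn T.entryAt Λ.diagram := by
  intro x hx y hy hxy
  have h := T.inj _ _ _ _ _ _ (Multipartition.mem_diagram.1 hx)
    (Multipartition.mem_diagram.1 hy) hxy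
  simp only [Prod.mk.injEq] at h
  exact Box.ext h.1 h.2.1 h.2.2

theorem entryAt_lt (T : StdTableau Λ) (hx : x ∈ Λ.diagram) : T.entryAt x < n :=
  T.lt_n _ _ _ (Multipartition.mem_diagram.1 hx)

theorem exists_entryAt_eq (T : StdTableau Λ) (i : ℕ) (hi : i < n) :
    ∃ x ∈ Λ.diagram, T.entryAt x = i := by
  obtain ⟨c, a, b, hmem, heq⟩ := T.surj i hi
  exact ⟨⟨c, a, b⟩, Multipartition.mem_diagram.2 hmem, heq⟩

theorem isStandard_of_entryAt_eq (T : StdTableau Λ) {box : ℕ → Box m}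
    (hbox : ∀ i < n, box i ∈ Λ.diagram) (hentry : ∀ i < n, T.entryAt (box i) = i) :
    IsStandard n box where
  injOn i hi j hj hij := (hentry i hi).symm.trans ((congrArg T.entryAt hij).trans (hentry j hj))
  exists_of_lt j hj x hx := by
    have hlt : T.entryAt x < j := hentry j hj ▸ T.entryAt_lt_entryAt (hbox j hj) hx
    refine ⟨_, hlt, T.entryAt_injOn (hbox _ (hlt.trans hj)) ?_ (hentry _ (hlt.trans hj))⟩
    exact Λ.isLowerSet_diagram hx.le (hbox j hj)

end StdTableau

namespace StdSeq

variable [NeZero m]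

/-- The position of the box `x` in a standard sequence; `0` if `x` does not occur. -/
def index (Z : StdSeq (Box m) n) (x : Box m) : ℕ :=
  if h : x ∈ Z.shape then (mem_initSeg.1 h).choose else 0

variable {Z : StdSeq (Box m) n}

theorem index_lt (hx : x ∈ Z.shape) : Z.index x < n := by
  rw [index, dif_pos hx]
  exact (mem_initSeg.1 hx).choose_spec.1

theorem apply_index (hx : x ∈ Z.shape) : Z (Z.index x) = x := by
  rw [index, dif_pos hx]
  exact (mem_initSeg.1 hx).choose_spec.2

theorem apply_mem_shape {i : ℕ} (hi : i < n) : Z i ∈ Z.shape := mem_initSeg.2 ⟨i, hi, rfl⟩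

theorem index_apply {i : ℕ} (hi : i < n) : Z.index (Z i) = i :=
  Z.isStandard.injOn (index_lt (apply_mem_shape hi)) hi (apply_index (apply_mem_shape hi))

theorem index_lt_index (hy : y ∈ Z.shape) (hxy : x < y) : Z.index x < Z.index y := by
  obtain ⟨i, hi, rfl⟩ := Z.isStandard.exists_of_lt _ (index_lt hy) x (by rwa [apply_index hy])
  rwa [index_apply (hi.trans (index_lt hy))]

/-- The standard tableau with the entry `i` in the box `Z i`. -/
def toTableau (Z : StdSeq (Box m) n) (hZ : Z.shape = Λ.diagram) : StdTableau Λ where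
  entry c i j := Z.index ⟨c, i, j⟩
  lt_n _ _ _ h := index_lt (hZ ▸ Multipartition.mem_diagram.2 h)
  inj c i j c' i' j' h h' heq := by
    rw [← Multipartition.mem_diagram (x := ⟨c, i, j⟩), ← hZ] at h
    rw [← Multipartition.mem_diagram (x := ⟨c', i', j'⟩), ← hZ] at h'
    have hbox := (apply_index h).symm.trans ((congrArg Z heq).trans (apply_index h'))
    cases hbox
    rfl
  surj i hi := ⟨_, _, _, Multipartition.mem_diagram.1 (hZ ▸ apply_mem_shape hi), index_apply hi⟩
  row c i j h := index_lt_index (hZ ▸ Multipartition.mem_diagram.2 h) (Box.lt_right ⟨c, i, j⟩)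
  col c i j h := index_lt_index (hZ ▸ Multipartition.mem_diagram.2 h) (Box.lt_below ⟨c, i, j⟩)
  outside _ _ _ h := dif_neg fun hmem => h (Multipartition.mem_diagram.1 (hZ ▸ hmem))

theorem toTableau_injective {Z Z' : StdSeq (Box m) n} (hZ : Z.shape = Λ.diagram)
    (hZ' : Z'.shape = Λ.diagram) (h : Z.toTableau hZ = Z'.toTableau hZ') : Z = Z' := by
  refine ext_of_lt fun i hi => ?_
  have hindex : Z.index (Z i) = Z'.index (Z i) := congrArg (StdTableau.entryAt · (Z i)) h
  have hmem : Z i ∈ Z'.shape := hZ' ▸ hZ ▸ apply_mem_shape hi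
  rw [← apply_index hmem, ← hindex, index_apply hi]

theorem exists_toTableau_eq (T : StdTableau Λ) :
    ∃ (Z : StdSeq (Box m) n) (hZ : Z.shape = Λ.diagram), Z.toTableau hZ = T := by
  choose! box hbox hentry using T.exists_entryAt_eq
  have hbox_entry {x : Box m} (hx : x ∈ Λ.diagram) : box (T.entryAt x) = x :=
    T.entryAt_injOn (hbox _ (T.entryAt_lt hx)) hx (hentry _ (T.entryAt_lt hx))
  let Z : StdSeq (Box m) n :=
    { toFun := fun i => if i < n then box i else default
      isStandard := (T.isStandard_of_entryAt_eq hbox hentry).congr fun i hi => (if_pos hi).symm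
      eq_default := fun i hi => if_neg hi.not_gt }
  have happly {i : ℕ} (hi : i < n) : Z i = box i := if_pos hi
  have hZ : Z.shape = Λ.diagram := by
    refine Finset.eq_of_subset_of_card_le (fun x hx => ?_) (by rw [card_shape, Λ.card_diagram])
    obtain ⟨i, hi, rfl⟩ := mem_initSeg.1 hx
    exact (happly hi).symm ▸ hbox i hi
  refine ⟨Z, hZ, StdTableau.eq_of_entryAt_eq fun x hx => ?_⟩
  have hlt := T.entryAt_lt hx
  calc Z.index x = Z.index (Z (T.entryAt x)) := by rw [happly hlt, hbox_entry hx]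
    _ = T.entryAt x := index_apply hlt

theorem numShape_diagram (Λ : Multipartition m n) :
    numShape n Λ.diagram = Nat.card (StdTableau Λ) :=
  Nat.card_congr (Equiv.ofBijective (fun Z => Z.1.toTableau Z.2)
    ⟨fun Z Z' h => Subtype.ext (toTableau_injective Z.2 Z'.2 h), fun T =>
      let ⟨Z, hZ, h⟩ := exists_toTableau_eq T
      ⟨⟨Z, hZ⟩, h⟩⟩)

end StdSeq

end Multipartitions

open MulOpposite in
/-- **Ariki(–Koike).**  Under the separation conditions on the parameters,
there is a family `(V^Λ)`, indexed by the `m`-multipartitions `Λ` of `n`, of pairwise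
non-isomorphic simple right `H_n`-modules (i.e. left modules over the opposite algebra)
such that every simple right `H_n`-module is isomorphic to some `V^Λ` and
`dim_k V^Λ` is the number of standard tableaux of shape `Λ`. -/
theorem semisimple_simple_modules [NeZero m] [NeZero n] (hq : q ≠ 0)
    (h1 : ∀ i : ℤ, i.natAbs < n → ∀ j j' : Fin m, j ≠ j' → q ^ i * v j - v j' ≠ 0)
    (h2 : ∀ i : ℕ, 1 ≤ i → i < n → (∑ j ∈ Finset.range (i + 1), q ^ j) ≠ 0) :
    ∃ V : Multipartition m n → ModuleCat (CH k m n v q)ᵐᵒᵖ,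
      (∀ Λ, IsSimpleModule (CH k m n v q)ᵐᵒᵖ (V Λ)) ∧
      (∀ Λ Λ' : Multipartition m n,
        Nonempty ((V Λ) ≃ₗ[(CH k m n v q)ᵐᵒᵖ] (V Λ')) → Λ = Λ') ∧
      (∀ W : ModuleCat (CH k m n v q)ᵐᵒᵖ, IsSimpleModule (CH k m n v q)ᵐᵒᵖ W →
        ∃ Λ, Nonempty (W ≃ₗ[(CH k m n v q)ᵐᵒᵖ] (V Λ))) ∧
      (∀ Λ, Module.finrank k (RestrictScalars k (CH k m n v q)ᵐᵒᵖ (V Λ)) =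
        Nat.card (StdTableau Λ)) := by
  have hs : IsSeparated n v q := ⟨hq, h1, h2⟩
  have hρ := isBlockDiagonal_seminormal hs
  have hshape (Λ : Multipartition m n) : Λ.diagram ∈ Set.range StdSeq.shape :=
    StdSeq.exists_shape_eq Λ.isLowerSet_diagram Λ.card_diagram
  refine ⟨fun Λ => ModuleCat.of _ (ULift (hρ.block Λ.diagram)), fun Λ => ?_, fun Λ Λ' ⟨e⟩ => ?_,
    fun W _ => ?_, fun Λ => ?_⟩
  · have := hρ.isSimpleModule_block (hshape Λ)
    exact IsSimpleModule.congr ULift.moduleEquiv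
  · exact Multipartition.diagram_injective (hρ.eq_of_linearEquiv_block (hshape Λ)
      (ULift.moduleEquiv.symm.trans (e.trans ULift.moduleEquiv)))
  · obtain ⟨Z, ⟨e⟩⟩ := hρ.exists_linearEquiv_block W
    obtain ⟨Λ, hΛ⟩ := Multipartition.exists_diagram_eq Z.isLowerSet_shape Z.card_shape
    rw [← hΛ] at e
    exact ⟨Λ, ⟨e.trans ULift.moduleEquiv.symm⟩⟩
  · exact (hρ.finrank_restrictScalars_ulift_block _).trans (StdSeq.numShape_diagram Λ)

end Cyclo
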